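/- Let k ≥ 1. For every demonic VASS A and every counter c of A, the termination complexity L of A is either in O(n^k) or in Ω(n^{k+1}), and the counter complexity C[c] of A is either in O(n^k) or in Ω(n^{k+1}). -/

import Mathlib

/-!
In a demonic VASS all choices are made by Demon, who can enforce any run, so both complexities are
maxima over runs; the length of a run is the gain of an additional counter that grows by one in
each step. It therefore suffices to show that the largest value a counter `c` attains from initial
values `n` is either in `O(n ^ k)` or in `Ω(n ^ (k + 1))`.

Consider first a strongly connected VASS in which each counter `x` starts with a value of order
`n ^ a x`. There are transition sets `M 0 ⊇ M 1 ⊇ …` such that transitions outside `M j` occur only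
`O(n ^ j)` times, together with an exponent `e x` for each counter (`Layers`). Given
`M 0, …, M j`, let `M (j + 1)` be the maximal support of a circulation on `M j` that, for each
counter `x` with `a x ≤ j + 1`, does not decrease `x` in any connected component of
`M (j + 1 - e x)`. Tucker's strengthening of the Farkas lemma gives a circulation with that support
and a dual solution that is strictly complementary to it.

* The dual solution is a potential, linear in the counters, that does not increase along `M j` and
  strictly decreases outside `M (j + 1)`. Its weight for `x` is constant on the components of
  `M (j + 1 - e x)`, so it changes `O(n ^ (j + 1 - e x))` times, each change costing `O(n ^ e x)`.
  Hence transitions outside `M (j + 1)` occur `O(n ^ (j + 1))` times, and a counter whose weight is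
  positive everywhere stays in `O(n ^ (j + 1))` (`Layers.exists_bound`).
* A counter with `a x ≤ j + 1` whose exponent is still open and whose weight is zero is strictly
  increased by the circulation. Nesting Eulerian circuits of the circulations, about `n` rounds of
  layer `i + 1` within each round of layer `i`, gives a cycle that raises all such counters to order
  `n ^ (j + 2)` while it never uses up more than is available (`Layers.exists_pump`).

Hence a counter with `e x ≤ k` stays in `O(n ^ e x)`, and a single run raises every counter to order
`n ^ e x`. In a general VASS, the exponents `e` at the exits of one strongly connected component
serve as the initial exponents `a` of the next one, by induction on the number of reachable states.
-/

open scoped Classical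

namespace VassPaper

noncomputable section

/-- A `d`-dimensional VASS (game): a finite nonempty set of control states together with a
finite set of transitions, where states are partitioned into angelic and demonic ones
(via the predicate `angelic`; demonic states are those that are not angelic). -/
structure VASS (d : ℕ) where
  Q : Type
  [finQ : Fintype Q]
  [neQ : Nonempty Q]
  Tran : Finset (Q × (Fin d → ℤ) × Q)
  angelic : Q → Prop

attribute [instance] VASS.finQ VASS.neQ

variable {d : ℕ}

/-- Every control state has at least one outgoing transition. -/
def VASS.total (V : VASS d) : Prop := ∀ q : V.Q, ∃ u p, (q, u, p) ∈ V.Tran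

/-- A demonic VASS: all states are demonic. -/
def VASS.demonic (V : VASS d) : Prop := ∀ q : V.Q, ¬ V.angelic q

/-- A configuration: a control state together with a vector of counter values. -/
abbrev VASS.Config (V : VASS d) : Type := V.Q × (Fin d → ℕ)

/-- A transition is enabled in a configuration if it is a transition of the VASS, starts in the
current control state, and does not make any counter negative. -/
def VASS.enabled (V : VASS d) (c : V.Config) (t : V.Q × (Fin d → ℤ) × V.Q) : Prop :=
  t ∈ V.Tran ∧ t.1 = c.1 ∧ ∀ i, 0 ≤ (c.2 i : ℤ) + t.2.1 i

/-- The configuration resulting from taking transition `t` in configuration `c`. -/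
def VASS.applyT (V : VASS d) (c : V.Config) (t : V.Q × (Fin d → ℤ) × V.Q) : V.Config :=
  (t.2.2, fun i => ((c.2 i : ℤ) + t.2.1 i).toNat)

/-- A strategy for the player owning the states in `own`: it assigns to every finite computation
(represented by its strict past `h` and current configuration `c`) an outgoing transition of the
current control state; the chosen transition must be enabled whenever some enabled transition
exists. -/
structure Strategy (V : VASS d) (own : V.Q → Prop) where
  choose : List V.Config → V.Config → V.Q × (Fin d → ℤ) × V.Q
  choose_mem : ∀ h c, own c.1 → (∃ t ∈ V.Tran, t.1 = c.1) →
    choose h c ∈ V.Tran ∧ (choose h c).1 = c.1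
  choose_enabled : ∀ h c, own c.1 → (∃ t, V.enabled c t) → V.enabled c (choose h c)

abbrev AngelStrategy (V : VASS d) := Strategy V V.angelic
abbrev DemonStrategy (V : VASS d) := Strategy V (fun q => ¬ V.angelic q)

/-- The maximal computation determined by the pair of strategies `(σ, π)` and the initial
configuration `init`: `playAux σ π init n` is (the history together with) the `n`-th
configuration of the computation, or `none` if the computation has already ended. -/
def playAux {V : VASS d} (σ : AngelStrategy V) (π : DemonStrategy V) (init : V.Config) :
    ℕ → Option (List V.Config × V.Config)
  | 0 => some ([], init)
  | n+1 => (playAux σ π init n).bind fun hc =>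
      let t := if V.angelic hc.2.1 then σ.choose hc.1 hc.2 else π.choose hc.1 hc.2
      if V.enabled hc.2 t then some (hc.1 ++ [hc.2], V.applyT hc.2 t) else none

/-- `c` is visited by the maximal computation `Comp^{σ,π}(init)`. -/
def visits {V : VASS d} (σ : AngelStrategy V) (π : DemonStrategy V) (init : V.Config)
    (c : V.Config) : Prop := ∃ n h, playAux σ π init n = some (h, c)

/-- The length of the maximal computation `Comp^{σ,π}(init)` (number of configurations),
as an extended natural number. -/
def lenComp {V : VASS d} (σ : AngelStrategy V) (π : DemonStrategy V) (init : V.Config) : ℕ∞ :=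
  ⨆ n ∈ {n : ℕ | (playAux σ π init n).isSome}, ((n : ℕ∞) + 1)

/-- The supremum of the values of counter `i` along the maximal computation
`Comp^{σ,π}(init)`. -/
def maxCounter {V : VASS d} (σ : AngelStrategy V) (π : DemonStrategy V) (init : V.Config)
    (i : Fin d) : ℕ∞ :=
  ⨆ c ∈ {c : V.Config | visits σ π init c}, (c.2 i : ℕ∞)

/-- `Tval(pv) = inf_σ sup_π len(Comp^{σ,π}(pv))`. -/
def Tval (V : VASS d) (init : V.Config) : ℕ∞ :=
  ⨅ σ : AngelStrategy V, ⨆ π : DemonStrategy V, lenComp σ π init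

/-- `Cval[c](pv) = inf_σ sup_π max_c(Comp^{σ,π}(pv))`. -/
def Cval (V : VASS d) (i : Fin d) (init : V.Config) : ℕ∞ :=
  ⨅ σ : AngelStrategy V, ⨆ π : DemonStrategy V, maxCounter σ π init i

/-- Termination complexity: `L(n) = max_{p ∈ Q} Tval(p n⃗)`. -/
def Lcomp (V : VASS d) : ℕ → ℕ∞ := fun n => ⨆ p : V.Q, Tval V (p, fun _ => n)

/-- Counter complexity: `C[c](n) = max_{p ∈ Q} Cval[c](p n⃗)`. -/
def Ccomp (V : VASS d) (i : Fin d) : ℕ → ℕ∞ := fun n => ⨆ p : V.Q, Cval V i (p, fun _ => n)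

/-- `f ∈ O(g)`: `f n ≤ C · g n` for some constant `C` and all sufficiently large `n`. -/
def BigO (f : ℕ → ℕ∞) (g : ℕ → ℕ) : Prop := ∃ C N : ℕ, ∀ n ≥ N, f n ≤ ((C * g n : ℕ) : ℕ∞)

/-- `f ∈ Ω(g)`: `f n ≥ g n / c` (i.e. `g n ≤ c · f n`) for some constant `c > 0` and all
sufficiently large `n`. -/
def BigOmega (f : ℕ → ℕ∞) (g : ℕ → ℕ) : Prop :=
  ∃ c N : ℕ, 0 < c ∧ ∀ n ≥ N, (g n : ℕ∞) ≤ (c : ℕ∞) * f n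

/-- `f ∈ Θ(g) = O(g) ∩ Ω(g)`. -/
def BigTheta (f : ℕ → ℕ∞) (g : ℕ → ℕ) : Prop := BigO f g ∧ BigOmega f g

/-- `f ∈ 2^{Ω(n)}`: `f n ≥ 2^{εn}` for some `ε > 0` (taken of the form `1/c`) and all
sufficiently large `n`. -/
def ExpOmega (f : ℕ → ℕ∞) : Prop :=
  ∃ c N : ℕ, 0 < c ∧ ∀ n ≥ N, ((2 ^ (n / c) : ℕ) : ℕ∞) ≤ f n

/-- `S ∈ 2^{O(n)}`: `S n ≤ 2^{Cn}` for some constant `C` and all sufficiently large `n`. -/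
def ExpO (S : ℕ → ℕ) : Prop := ∃ C N : ℕ, ∀ n ≥ N, S n ≤ 2 ^ (C * n)

/-! ### Strictly complementary solutions of linear systems -/

section Tucker

variable {K E ι τ : Type*} [Field K] [LinearOrder K]

section Dual

variable [AddCommGroup E] [Module K E]

/-- `u` and `y` witness that the functional `a i₀` is strictly complementary within the
family `a i`, `i ∈ s`: a common point `u` of the half-spaces `0 ≤ a i` and a nonnegative linear
dependency `y`, one of which is strict at `i₀`. -/
structure IsComplementaryAt (a : ι → Module.Dual K E) (s : Finset ι) (i₀ : ι) (u : E)
    (y : ι → K) : Prop where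
  nonneg : ∀ i, 0 ≤ y i
  dependency : ∑ i ∈ s, y i • a i = 0
  apply_nonneg : ∀ i ∈ s, 0 ≤ a i u
  strict : 0 < y i₀ + a i₀ u

theorem IsComplementaryAt.insert_of_nonneg {a : ι → Module.Dual K E} {s : Finset ι} {i₀ j : ι}
    {u : E} {y : ι → K} (h : IsComplementaryAt a s i₀ u y) (hj : j ∉ s) (hi₀ : i₀ ∈ s)
    (hu : 0 ≤ a j u) : IsComplementaryAt a (insert j s) i₀ u (Function.update y j 0) where
  nonneg i := by
    rcases eq_or_ne i j with rfl | hij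
    · simp
    · simpa [hij] using h.nonneg i
  dependency := by
    rw [Finset.sum_insert hj, ← h.dependency, Function.update_self, zero_smul, zero_add]
    exact Finset.sum_congr rfl fun i hi => by
      rw [Function.update_of_ne (ne_of_mem_of_not_mem hi hj)]
  apply_nonneg := Finset.forall_mem_insert _ _ _ |>.2 ⟨hu, h.apply_nonneg⟩
  strict := by
    rw [Function.update_of_ne (ne_of_mem_of_not_mem hi₀ hj)]
    exact h.strict

variable [IsStrictOrderedRing K]

theorem exists_isComplementaryAt_singleton (a : ι → Module.Dual K E) (i₀ : ι) :
    ∃ u y, IsComplementaryAt a {i₀} i₀ u y := by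
  by_cases ha : a i₀ = 0
  · exact ⟨0, fun _ => 1, by simp, by simp [ha], by simp, by simp⟩
  · obtain ⟨u, hu⟩ := DFunLike.ne_iff.1 ha
    rw [LinearMap.zero_apply] at hu
    have hpos : 0 < a i₀ (a i₀ u • u) := by simpa using mul_self_pos.2 hu
    exact ⟨a i₀ u • u, 0, by simp, by simp, by simpa using hpos.le, by simpa using hpos⟩

/-- Shearing along `u` makes each functional `a i + r i • a j` vanish at `u`, so that `u` can be
used to bring the value of `a j` to zero. -/
theorem IsComplementaryAt.insert_of_neg {a : ι → Module.Dual K E} {s : Finset ι} {i₀ j : ι}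
    {u u' : E} {y' : ι → K} (hj : j ∉ s) (hi₀ : i₀ ∈ s) (hu : ∀ i ∈ s, 0 ≤ a i u)
    (hju : a j u < 0)
    (h : IsComplementaryAt (fun i => a i + (-(a i u) / a j u) • a j) s i₀ u' y') :
    IsComplementaryAt a (insert j s) i₀ (u' - (a j u' / a j u) • u)
      (Function.update y' j (∑ i ∈ s, y' i * (-(a i u) / a j u))) := by
  have hr : ∀ i ∈ s, 0 ≤ -(a i u) / a j u := fun i hi =>
    div_nonneg_of_nonpos (neg_nonpos.2 (hu i hi)) hju.le
  have hvalue : ∀ i, a i (u' - (a j u' / a j u) • u) = (a i + (-(a i u) / a j u) • a j) u' := by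
    intro i
    simp only [map_sub, map_smul, smul_eq_mul, LinearMap.add_apply, LinearMap.smul_apply]
    ring
  refine ⟨fun i => ?_, ?_, Finset.forall_mem_insert _ _ _ |>.2 ⟨?_, fun i hi => ?_⟩, ?_⟩
  · rcases eq_or_ne i j with rfl | hij
    · rw [Function.update_self]
      exact Finset.sum_nonneg fun i hi => mul_nonneg (h.nonneg i) (hr i hi)
    · simpa [hij] using h.nonneg i
  · rw [Finset.sum_insert hj, ← h.dependency, Function.update_self, Finset.sum_smul,
      ← Finset.sum_add_distrib]
    exact Finset.sum_congr rfl fun i hi => by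
      rw [Function.update_of_ne (ne_of_mem_of_not_mem hi hj), smul_add, mul_smul, add_comm]
  · simp [hju.ne]
  · rw [hvalue]
    exact h.apply_nonneg i hi
  · rw [Function.update_of_ne (ne_of_mem_of_not_mem hi₀ hj), hvalue]
    exact h.strict

theorem exists_isComplementaryAt (a : ι → Module.Dual K E) {s : Finset ι} {i₀ : ι}
    (hi₀ : i₀ ∈ s) : ∃ u y, IsComplementaryAt a s i₀ u y := by
  rw [← Finset.insert_erase hi₀]
  generalize hs : s.erase i₀ = t
  replace hs : i₀ ∉ t := hs ▸ Finset.notMem_erase i₀ s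
  induction t using Finset.induction_on generalizing a with
  | empty => exact exists_isComplementaryAt_singleton a i₀
  | insert j t hj ih =>
    rw [Finset.mem_insert, not_or] at hs
    have hjt : j ∉ insert i₀ t := by
      rw [Finset.mem_insert, not_or]
      exact ⟨Ne.symm hs.1, hj⟩
    have hmem : i₀ ∈ insert i₀ t := Finset.mem_insert_self _ _
    obtain ⟨u, y, huy⟩ := ih a hs.2
    rw [Finset.insert_comm]
    rcases le_or_gt 0 (a j u) with hju | hju
    · exact ⟨u, _, huy.insert_of_nonneg hjt hmem hju⟩
    · obtain ⟨u', y', h'⟩ := ih (fun i => a i + (-(a i u) / a j u) • a j) hs.2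
      exact ⟨_, _, .insert_of_neg hjt hmem huy.apply_nonneg hju h'⟩

theorem exists_complementary [Fintype ι] (a : ι → Module.Dual K E) :
    ∃ (u : E) (y : ι → K), (∀ i, 0 ≤ y i) ∧ ∑ i, y i • a i = 0 ∧ (∀ i, 0 ≤ a i u) ∧
      ∀ i, 0 < y i + a i u := by
  choose u y h using fun j => exists_isComplementaryAt a (Finset.mem_univ j)
  refine ⟨∑ j, u j, fun i => ∑ j, y j i, fun i => Finset.sum_nonneg fun j _ => (h j).nonneg i, ?_,
    fun i => ?_, fun i => ?_⟩
  · simp only [Finset.sum_smul]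
    rw [Finset.sum_comm]
    exact Finset.sum_eq_zero fun j _ => (h j).dependency
  · rw [map_sum]
    exact Finset.sum_nonneg fun j _ => (h j).apply_nonneg i (Finset.mem_univ i)
  · rw [map_sum, ← Finset.sum_add_distrib]
    exact Finset.sum_pos'
      (fun j _ => add_nonneg ((h j).nonneg i) ((h j).apply_nonneg i (Finset.mem_univ i)))
      ⟨i, Finset.mem_univ i, (h i).strict⟩

end Dual

variable [IsStrictOrderedRing K]

open Matrix in
/-- Tucker's strengthening of the Farkas lemma. -/
theorem exists_strictly_complementary [Fintype ι] [Fintype τ] (A : Matrix ι τ K) :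
    ∃ (x : τ → K) (y : ι → K), 0 ≤ x ∧ 0 ≤ y ∧ 0 ≤ A *ᵥ x ∧ y ᵥ* A ≤ 0 ∧
      (∀ t, 0 < x t ∨ (y ᵥ* A) t < 0) ∧ ∀ i, 0 < y i ∨ 0 < (A *ᵥ x) i := by
  have hpos : ∀ {b c : K}, 0 ≤ b → 0 < b + c → 0 < b ∨ 0 < c := fun hb hbc =>
    hb.lt_or_eq.imp_right fun h => by rwa [← h, zero_add] at hbc
  obtain ⟨x, y, hy, hsum, hx, hstrict⟩ := exists_complementary (ι := ι ⊕ τ)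
    (Sum.elim (fun i => LinearMap.proj i ∘ₗ A.mulVecLin) (fun t => LinearMap.proj t))
  have hslack : ∀ t, ((fun i => y (.inl i)) ᵥ* A) t = -y (.inr t) := fun t => by
    have := LinearMap.congr_fun hsum (Pi.single t 1)
    simp only [Fintype.sum_sum_type, Sum.elim_inl, Sum.elim_inr, LinearMap.add_apply,
      LinearMap.sum_apply, LinearMap.smul_apply, LinearMap.comp_apply, LinearMap.proj_apply,
      Matrix.mulVecLin_apply, Matrix.mulVec_single_one, smul_eq_mul, Pi.single_apply, mul_ite,
      mul_one, mul_zero, Finset.sum_ite_eq', Finset.mem_univ, if_true,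
      LinearMap.zero_apply] at this
    exact eq_neg_of_add_eq_zero_left this
  refine ⟨x, fun i => y (.inl i), fun t => hx (.inr t), fun i => hy _, fun i => hx (.inl i),
    fun t => ?_, fun t => ?_, fun i => hpos (hy _) (hstrict (.inl i))⟩
  · rw [hslack]
    exact neg_nonpos.2 (hy _)
  · rw [hslack, neg_lt_zero]
    exact hpos (hx (.inr t)) (by rw [add_comm]; exact hstrict (.inr t))

theorem exists_nat_mul_eq_natCast [Finite ι] (f : ι → ℚ) (hf : 0 ≤ f) :
    ∃ D : ℕ, 0 < D ∧ ∃ g : ι → ℕ, ∀ i, (g i : ℚ) = D * f i := by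
  have := Fintype.ofFinite ι
  refine ⟨∏ i, (f i).den, Finset.prod_pos fun i _ => (f i).pos, ?_⟩
  choose e he using fun i => Finset.dvd_prod_of_mem (fun i => (f i).den) (Finset.mem_univ i)
  refine ⟨fun i => e i * (f i).num.toNat, fun i => ?_⟩
  have hnum : ((f i).num.toNat : ℚ) = (f i).num := by
    exact_mod_cast Int.toNat_of_nonneg (Rat.num_nonneg.2 (hf i))
  rw [he i, Nat.cast_mul, Nat.cast_mul, hnum, ← Rat.den_mul_eq_num]
  ring

theorem exists_strictly_complementary_nat [Fintype ι] [Fintype τ] (A : ι → τ → ℤ) :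
    ∃ (x : τ → ℕ) (y : ι → ℕ), (∀ i, 0 ≤ ∑ t, A i t * x t) ∧ (∀ t, ∑ i, y i * A i t ≤ 0) ∧
      (∀ t, 0 < x t ∨ ∑ i, y i * A i t < 0) ∧ ∀ i, 0 < y i ∨ 0 < ∑ t, A i t * x t := by
  obtain ⟨x, y, hx, hy, hAx, hyA, hxs, hys⟩ :=
    exists_strictly_complementary fun i t => (A i t : ℚ)
  obtain ⟨D, hD, m, hm⟩ := exists_nat_mul_eq_natCast x hx
  obtain ⟨F, hF, z, hz⟩ := exists_nat_mul_eq_natCast y hy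
  rw [← Nat.cast_pos (α := ℚ)] at hD hF
  have hAm : ∀ i, ((∑ t, A i t * m t : ℤ) : ℚ) = D * ∑ t, A i t * x t := fun i => by
    push_cast
    rw [Finset.mul_sum]
    exact Finset.sum_congr rfl fun t _ => by rw [hm]; ring
  have hzA : ∀ t, ((∑ i, z i * A i t : ℤ) : ℚ) = F * ∑ i, y i * A i t := fun t => by
    push_cast
    rw [Finset.mul_sum]
    exact Finset.sum_congr rfl fun i _ => by rw [hz]; ring
  refine ⟨m, z, fun i => ?_, fun t => ?_, fun t => ?_, fun i => ?_⟩
  · rw [← Int.cast_nonneg_iff (R := ℚ), hAm]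
    exact mul_nonneg hD.le (hAx i)
  · rw [← Int.cast_nonpos (R := ℚ), hzA]
    exact mul_nonpos_of_nonneg_of_nonpos hF.le (hyA t)
  · rw [← Nat.cast_pos (α := ℚ), ← Int.cast_lt_zero (R := ℚ), hm, hzA]
    exact (hxs t).imp (mul_pos hD) (mul_neg_of_pos_of_neg hF)
  · rw [← Nat.cast_pos (α := ℚ), ← Int.cast_pos (R := ℚ), hz, hAm]
    exact (hys i).imp (mul_pos hF) (mul_pos hD)

end Tucker

/-! ### Walks and their effects -/

/-- A transition over the states `Q` and the counters `X`: its source, its effect on the counters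
and its target. -/
abbrev Tr (Q X : Type*) : Type _ := Q × (X → ℤ) × Q

section Walks

variable {Q X : Type*} {p q r : Q} {t : Tr Q X} {w w₁ w₂ c : List (Tr Q X)} {v D E : X → ℤ}

/-- The transitions in `w` are consecutive and lead from `p` to `q`; counter values are ignored. -/
def IsWalk : Q → List (Tr Q X) → Q → Prop
  | p, [], q => p = q
  | p, t :: w, q => t.1 = p ∧ IsWalk t.2.2 w q

/-- The total effect of a list of transitions. -/
def eff (w : List (Tr Q X)) : X → ℤ := (w.map (·.2.1)).sum

/-- The transitions in `w`, taken one after the other from the counter values `v`, keep all counters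
nonnegative. -/
def Executable : List (Tr Q X) → (X → ℤ) → Prop
  | [], v => 0 ≤ v
  | t :: w, v => 0 ≤ v ∧ Executable w (v + t.2.1)

@[simp] theorem eff_nil : eff ([] : List (Tr Q X)) = 0 := rfl

@[simp] theorem eff_cons (t : Tr Q X) (w : List (Tr Q X)) : eff (t :: w) = t.2.1 + eff w :=
  List.sum_cons

@[simp] theorem eff_append (w₁ w₂ : List (Tr Q X)) : eff (w₁ ++ w₂) = eff w₁ + eff w₂ := by
  simp [eff]

theorem isWalk_append : IsWalk p (w₁ ++ w₂) q ↔ ∃ r, IsWalk p w₁ r ∧ IsWalk r w₂ q := by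
  induction w₁ generalizing p with
  | nil => simp [IsWalk]
  | cons t w ih => simp [IsWalk, ih, and_assoc]

theorem IsWalk.append (h₁ : IsWalk p w₁ r) (h₂ : IsWalk r w₂ q) : IsWalk p (w₁ ++ w₂) q :=
  isWalk_append.2 ⟨r, h₁, h₂⟩

theorem isWalk_singleton (t : Tr Q X) : IsWalk t.1 [t] t.2.2 := ⟨rfl, rfl⟩

theorem IsWalk.exists_append_of_mem (hw : IsWalk p w q) (hr : r ∈ p :: w.map (·.2.2)) :
    ∃ w₁ w₂, w = w₁ ++ w₂ ∧ IsWalk p w₁ r ∧ IsWalk r w₂ q := by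
  induction w generalizing p with
  | nil =>
    obtain rfl : r = p := by simpa using hr
    exact ⟨[], [], rfl, rfl, hw⟩
  | cons t w ih =>
    rcases List.mem_cons.1 hr with rfl | hr
    · exact ⟨[], t :: w, rfl, rfl, hw⟩
    · obtain ⟨w₁, w₂, rfl, h₁, h₂⟩ := ih hw.2 (by simpa using hr)
      exact ⟨t :: w₁, w₂, rfl, ⟨hw.1, h₁⟩, h₂⟩

theorem Executable.nonneg (h : Executable w v) : 0 ≤ v := by
  cases w with
  | nil => exact h
  | cons t w => exact h.1

theorem executable_append :
    Executable (w₁ ++ w₂) v ↔ Executable w₁ v ∧ Executable w₂ (v + eff w₁) := by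
  induction w₁ generalizing v with
  | nil => simpa [Executable] using Executable.nonneg
  | cons t w ih => simp [Executable, ih, and_assoc, add_assoc]

theorem Executable.nonneg_end (h : Executable w v) : 0 ≤ v + eff w :=
  (executable_append (w₂ := []).1 (by rwa [List.append_nil])).2

theorem Executable.mono (h : Executable w v) (hv : v ≤ D) : Executable w D := by
  induction w generalizing v D with
  | nil => exact le_trans h hv
  | cons t w ih => exact ⟨h.1.trans hv, ih h.2 (by gcongr)⟩

theorem exists_executable_const [Finite X] (w : List (Tr Q X)) :
    ∃ K : ℕ, Executable w fun _ => (K : ℤ) := by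
  induction w with
  | nil => exact ⟨0, fun _ => le_rfl⟩
  | cons t w ih =>
    obtain ⟨K, hK⟩ := ih
    obtain ⟨C, hC⟩ := Finite.exists_le fun x => (-t.2.1 x).toNat
    refine ⟨K + C, fun _ => Int.natCast_nonneg _, hK.mono fun x => ?_⟩
    have := hC x
    simp only [Pi.add_apply]
    omega

theorem IsWalk.exists_insert (hw : IsWalk p w p) (hD : Executable w D)
    (hq : q ∈ p :: w.map (·.2.2)) (hc : IsWalk q c q) (hE : Executable c E) :
    ∃ w', IsWalk p w' p ∧ (w' : Multiset (Tr Q X)) = w + c ∧ Executable w' (D + E) := by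
  obtain ⟨w₁, w₂, rfl, h₁, h₂⟩ := hw.exists_append_of_mem hq
  obtain ⟨hD₁, hD₂⟩ := executable_append.1 hD
  refine ⟨w₁ ++ (c ++ w₂), h₁.append (hc.append h₂), ?_,
    executable_append.2 ⟨hD₁.mono (le_add_of_nonneg_right hE.nonneg), executable_append.2
      ⟨hE.mono ?_, hD₂.mono ?_⟩⟩⟩
  · rw [Multiset.coe_add, Multiset.coe_eq_coe, List.append_assoc]
    exact List.perm_append_comm.append_left w₁
  · have := hD₁.nonneg_end
    rw [add_right_comm]
    exact le_add_of_nonneg_left this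
  · have := hE.nonneg_end
    calc D + eff w₁ ≤ D + eff w₁ + (E + eff c) := le_add_of_nonneg_right this
      _ = D + E + eff w₁ + eff c := by abel

theorem IsWalk.exists_insert_finset (hw : IsWalk p w p) (hD : Executable w D) (s : Finset Q)
    (c : Q → List (Tr Q X)) (hs : ∀ q ∈ s, q ∈ p :: w.map (·.2.2))
    (hc : ∀ q ∈ s, IsWalk q (c q) q) (hE : ∀ q ∈ s, Executable (c q) E) :
    ∃ w', IsWalk p w' p ∧ (w' : Multiset (Tr Q X)) = w + ∑ q ∈ s, (c q : Multiset (Tr Q X)) ∧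
      Executable w' (D + s.card • E) := by
  induction s using Finset.induction_on with
  | empty => exact ⟨w, hw, by simp, by simpa using hD⟩
  | insert q s hq ih =>
    rw [Finset.forall_mem_insert] at hs hc hE
    obtain ⟨w', hw', hcoe, hD'⟩ := ih hs.2 hc.2 hE.2
    have hmem : q ∈ p :: w'.map (·.2.2) := by
      refine List.mem_cons.2 ((List.mem_cons.1 hs.1).imp_right fun h => ?_)
      obtain ⟨t, ht, rfl⟩ := List.mem_map.1 h
      refine List.mem_map_of_mem (Multiset.mem_coe.1 ?_)
      rw [hcoe]
      exact Multiset.mem_add.2 (.inl ht)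
    obtain ⟨w'', hw'', hcoe', hD''⟩ := hw'.exists_insert hD' hmem hc.1 hE.1
    refine ⟨w'', hw'', ?_, ?_⟩
    · rw [hcoe', hcoe, Finset.sum_insert hq, add_assoc, add_comm (c q : Multiset (Tr Q X))]
    · rwa [Finset.card_insert_of_notMem hq, succ_nsmul, ← add_assoc]

/-- The word `w` repeated `m` times. -/
def rep (m : ℕ) (w : List (Tr Q X)) : List (Tr Q X) := (List.replicate m w).flatten

theorem rep_zero (w : List (Tr Q X)) : rep 0 w = [] := rfl

theorem rep_succ (m : ℕ) (w : List (Tr Q X)) : rep (m + 1) w = w ++ rep m w := by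
  simp [rep, List.replicate_succ]

theorem mem_of_mem_rep {m : ℕ} (h : t ∈ rep m w) : t ∈ w := by
  obtain ⟨w', hw', h⟩ := List.mem_flatten.1 h
  exact List.eq_of_mem_replicate hw' ▸ h

theorem IsWalk.rep (h : IsWalk p w p) (m : ℕ) : IsWalk p (rep m w) p := by
  induction m with
  | zero => rfl
  | succ m ih => exact rep_succ m w ▸ h.append ih

@[simp] theorem eff_rep (m : ℕ) (w : List (Tr Q X)) : eff (rep m w) = m • eff w := by
  simp [rep, eff, List.map_flatten, List.sum_flatten]

theorem Executable.rep (h : Executable w v) (hE : 0 ≤ E) (hw : 0 ≤ E + eff w) (m : ℕ) :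
    Executable (rep m w) (v + m • E) := by
  induction m with
  | zero => simpa [rep_zero, Executable] using h.nonneg
  | succ m ih =>
    rw [rep_succ, executable_append]
    refine ⟨h.mono (le_add_of_nonneg_right (nsmul_nonneg hE _)), ih.mono ?_⟩
    calc v + m • E ≤ v + m • E + (E + eff w) := le_add_of_nonneg_right hw
      _ = v + (m + 1) • E + eff w := by rw [succ_nsmul]; abel

end Walks

/-! ### Circulations and Eulerian circuits -/

section Circulations

variable {Q X : Type*} {p q r : Q} {t : Tr Q X} {w : List (Tr Q X)} {M N : Multiset (Tr Q X)}

/-- `p` and `q` lie in the same weakly connected component of the graph with edges `M`. -/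
def Conn (M : Multiset (Tr Q X)) : Q → Q → Prop :=
  Relation.EqvGen fun p q => ∃ u, (p, u, q) ∈ M

theorem Conn.refl (M : Multiset (Tr Q X)) (p : Q) : Conn M p p := Relation.EqvGen.refl p

theorem Conn.symm (h : Conn M p q) : Conn M q p := Relation.EqvGen.symm _ _ h

theorem Conn.trans (h : Conn M p q) (h' : Conn M q r) : Conn M p r :=
  Relation.EqvGen.trans _ _ _ h h'

theorem Conn.of_mem (h : t ∈ M) : Conn M t.1 t.2.2 := Relation.EqvGen.rel _ _ ⟨t.2.1, h⟩

theorem Conn.mono (h : M ⊆ N) (hpq : Conn M p q) : Conn N p q :=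
  Relation.EqvGen.mono (fun _ _ ⟨u, hu⟩ => ⟨u, h hu⟩) _ _ hpq

theorem Conn.apply_eq {β : Sort*} {f : Q → β} (hf : ∀ t ∈ M, f t.1 = f t.2.2) (h : Conn M p q) :
    f p = f q := by
  induction h with
  | rel p q h => exact hf _ h.choose_spec
  | refl => rfl
  | symm _ _ _ ih => exact ih.symm
  | trans _ _ _ _ _ ih₁ ih₂ => exact ih₁.trans ih₂

theorem IsWalk.conn (h : IsWalk p w q) (hw : ∀ t ∈ w, t ∈ M) : Conn M p q := by
  induction w generalizing p with
  | nil => exact h ▸ Conn.refl M p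
  | cons t w ih =>
    rw [List.forall_mem_cons] at hw
    exact h.1 ▸ (Conn.of_mem hw.1).trans (ih h.2 hw.2)

/-- A circulation, encoded as the multiset of transitions in which each one occurs as often as the
circulation prescribes: every state is entered as often as it is left. -/
def IsCirculation (M : Multiset (Tr Q X)) : Prop := M.map (·.1) = M.map (·.2.2)

theorem IsCirculation.add (hM : IsCirculation M) (hN : IsCirculation N) :
    IsCirculation (M + N) := by
  rw [IsCirculation, Multiset.map_add, Multiset.map_add, hM, hN]

theorem isCirculation_sum {ι : Type*} {s : Finset ι} {f : ι → Multiset (Tr Q X)}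
    (h : ∀ i ∈ s, IsCirculation (f i)) : IsCirculation (∑ i ∈ s, f i) :=
  Finset.sum_induction f IsCirculation (fun _ _ => IsCirculation.add) rfl h

theorem IsWalk.balance (h : IsWalk p w q) :
    q ::ₘ (w : Multiset (Tr Q X)).map (·.1) = p ::ₘ (w : Multiset (Tr Q X)).map (·.2.2) := by
  induction w generalizing p with
  | nil => exact congrArg (· ::ₘ 0) h.symm
  | cons t w ih =>
    rw [← Multiset.cons_coe, Multiset.map_cons, Multiset.map_cons, Multiset.cons_swap, ih h.2,
      h.1]

theorem IsWalk.isCirculation (h : IsWalk p w p) : IsCirculation (w : Multiset (Tr Q X)) :=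
  (Multiset.cons_inj_right p).1 h.balance

theorem IsCirculation.remainder_balance (hM : IsCirculation ((w : Multiset (Tr Q X)) + N))
    (hw : IsWalk p w q) : p ::ₘ N.map (·.1) = q ::ₘ N.map (·.2.2) := by
  have hb := hw.balance
  rw [IsCirculation, Multiset.map_add, Multiset.map_add] at hM
  refine add_left_cancel (a := (w : Multiset (Tr Q X)).map (·.2.2)) ?_
  rw [Multiset.add_cons, ← Multiset.cons_add, ← hb, Multiset.cons_add, hM, Multiset.add_cons]

theorem exists_longest_list {α : Type*} (M : Multiset α) {P : List α → Prop} (h : P []) :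
    ∃ w N, P w ∧ (w : Multiset α) + N = M ∧
      ∀ w', P w' → (w' : Multiset α) ≤ M → w'.length ≤ w.length := by
  obtain ⟨w, ⟨hw, hwM⟩, hmin⟩ := exists_minimalFor_of_wellFoundedLT
    (fun w : List α => P w ∧ (w : Multiset α) ≤ M) (fun w => M.card - w.length)
    ⟨[], h, Multiset.zero_le M⟩
  refine ⟨w, M - w, hw, add_tsub_cancel_of_le hwM, fun w' hw' hM => ?_⟩
  have : M.card - w'.length ≤ M.card - w.length → M.card - w.length ≤ M.card - w'.length :=
    hmin ⟨hw', hM⟩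
  have := Multiset.card_le_card hM
  rw [Multiset.coe_card] at this
  omega

/-- A longest walk within a circulation can only get stuck at its starting point. -/
theorem IsCirculation.exists_closed_walk (hM : IsCirculation M) (ht : t ∈ M) :
    ∃ w : List (Tr Q X), w ≠ [] ∧ IsWalk t.1 w t.1 ∧ (w : Multiset (Tr Q X)) ≤ M := by
  obtain ⟨w, N, ⟨q, hw⟩, rfl, hmax⟩ := exists_longest_list M
    (P := fun w => ∃ q, IsWalk t.1 w q) ⟨t.1, rfl⟩
  have hstuck : ∀ s ∈ N, s.1 ≠ q := by
    rintro s hs rfl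
    have := hmax (w ++ [s]) ⟨_, hw.append (isWalk_singleton s)⟩ (by
      rw [← Multiset.coe_add]
      exact add_le_add_right (Multiset.singleton_le.2 hs) _)
    simp at this
  obtain rfl : q = t.1 := by
    have hq : q ∈ t.1 ::ₘ N.map (·.1) :=
      hM.remainder_balance hw ▸ Multiset.mem_cons_self q _
    refine (Multiset.mem_cons.1 hq).resolve_right fun hq => ?_
    obtain ⟨s, hs, hsq⟩ := Multiset.mem_map.1 hq
    exact hstuck s hs hsq
  refine ⟨w, ?_, hw, Multiset.le_add_right _ _⟩
  rintro rfl
  exact hstuck t (by simpa using ht) rfl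

theorem IsWalk.source_mem (hw : IsWalk p w q) (ht : t ∈ w) : t.1 ∈ p :: w.map (·.2.2) := by
  have : t.1 ∈ q ::ₘ (w : Multiset (Tr Q X)).map (·.1) :=
    Multiset.mem_cons_of_mem (Multiset.mem_map_of_mem _ ht)
  rw [hw.balance] at this
  exact this

/-- The part of a circulation left over by a longest closed walk meets no state of that walk: a
closed walk through such a state could be inserted. -/
theorem IsCirculation.exists_closed_walk_remainder (hM : IsCirculation M) (p : Q) :
    ∃ (w : List (Tr Q X)) (N : Multiset (Tr Q X)), (w : Multiset (Tr Q X)) + N = M ∧ IsWalk p w p ∧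
      ∀ t ∈ N, t.1 ∉ p :: w.map (·.2.2) ∧ t.2.2 ∉ p :: w.map (·.2.2) := by
  obtain ⟨w, N, hw, rfl, hmax⟩ := exists_longest_list M (P := fun w => IsWalk p w p) rfl
  have hN : IsCirculation N := (Multiset.cons_inj_right p).1 (hM.remainder_balance hw)
  have hsource : ∀ t ∈ N, t.1 ∉ p :: w.map (·.2.2) := by
    intro t ht hmem
    obtain ⟨c, hc, hcw, hcN⟩ := hN.exists_closed_walk ht
    obtain ⟨w₁, w₂, rfl, h₁, h₂⟩ := hw.exists_append_of_mem hmem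
    have hperm : (↑(w₁ ++ (c ++ w₂)) : Multiset (Tr Q X)) = ↑(w₁ ++ w₂) + c := by
      simp only [← Multiset.coe_add]
      abel
    have := hmax (w₁ ++ (c ++ w₂)) (h₁.append (hcw.append h₂))
      (hperm ▸ add_le_add_right hcN _)
    simp only [List.length_append] at this
    have := List.length_pos_iff.2 hc
    omega
  refine ⟨w, N, rfl, hw, fun t ht => ⟨hsource t ht, fun hmem => ?_⟩⟩
  obtain ⟨s, hs, hst⟩ := Multiset.mem_map.1 (show t.2.2 ∈ N.map (·.1) from
    hN.symm ▸ Multiset.mem_map_of_mem _ ht)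
  exact hsource s hs (hst ▸ hmem)

theorem IsCirculation.exists_euler_circuit (hM : IsCirculation M) (p : Q) :
    ∃ w : List (Tr Q X), IsWalk p w p ∧
      (w : Multiset (Tr Q X)) = M.filter (fun t => Conn M t.1 p) ∧
      ∀ q, Conn M p q → q ∈ p :: w.map (·.2.2) := by
  obtain ⟨w, N, rfl, hw, hN⟩ := hM.exists_closed_walk_remainder p
  have hvisited : ∀ q, Conn ((w : Multiset (Tr Q X)) + N) p q → q ∈ p :: w.map (·.2.2) := by
    intro q hq
    refine (hq.apply_eq (f := (· ∈ p :: w.map (·.2.2))) fun t ht => propext ?_).mp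
      List.mem_cons_self
    rcases Multiset.mem_add.1 ht with ht | ht
    · exact iff_of_true (hw.source_mem ht) (List.mem_cons_of_mem _ (List.mem_map_of_mem ht))
    · exact iff_of_false (hN t ht).1 (hN t ht).2
  refine ⟨w, hw, ?_, hvisited⟩
  rw [Multiset.filter_add, Multiset.filter_eq_self.2, Multiset.filter_eq_nil.2, add_zero]
  · exact fun t ht htp => (hN t ht).1 (hvisited _ htp.symm)
  · intro t ht
    obtain ⟨w₁, w₂, rfl⟩ := List.append_of_mem ht
    obtain ⟨r, h₁, h₂⟩ := isWalk_append.1 hw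
    rw [h₂.1]
    exact (h₁.conn fun s hs => Multiset.mem_add.2 (.inl (by simp [hs]))).symm

end Circulations

/-! ### Circulations and rankings -/

section Alternative

variable {Q X : Type*} {p : Q} {M B B' : Multiset (Tr Q X)} {w : List (Tr Q X)}

/-- The total effect of the part of the circulation `M` that lies in the `B`-component of `p`. -/
def compEff (B M : Multiset (Tr Q X)) (p : Q) : X → ℤ :=
  (M.map fun t => if Conn B t.1 p then t.2.1 else 0).sum

theorem sum_map_filter {α β : Type*} [AddCommMonoid β] (P : α → Prop) [DecidablePred P] (f : α → β)
    (M : Multiset α) : ((M.filter P).map f).sum = (M.map fun a => if P a then f a else 0).sum := by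
  induction M using Multiset.induction_on with
  | empty => rfl
  | cons a M ih => by_cases ha : P a <;> simp [ha, ih]

theorem eff_eq_compEff (hw : (w : Multiset (Tr Q X)) = M.filter (fun t => Conn M t.1 p)) :
    eff w = compEff M M p := by
  rw [eff, compEff, ← Multiset.sum_coe, ← Multiset.map_coe, hw, sum_map_filter]

theorem exists_representatives [Finite Q] (hB : B ⊆ B') (p : Q) :
    ∃ s : Finset Q, (∀ q ∈ s, Conn B' p q) ∧
      ∀ M : Multiset (Tr Q X), ∑ q ∈ s, compEff B M q = compEff B' M p := by
  have := Fintype.ofFinite Q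
  let S : Setoid Q := ⟨Conn B, Conn.refl B, Conn.symm, Conn.trans⟩
  let out : Q → Q := fun q => (Quotient.mk S q).out
  have hout : ∀ q, Conn B (out q) q := fun q => Quotient.exact (Quotient.out_eq (Quotient.mk S q))
  have hout_eq : ∀ q r, Conn B r q ∧ out q = q ↔ q = out r := fun q r => by
    refine ⟨fun ⟨h, hq⟩ => hq ▸ congrArg Quotient.out (Quotient.sound h.symm), ?_⟩
    rintro rfl
    exact ⟨(hout r).symm, congrArg Quotient.out (Quotient.sound (hout r))⟩
  refine ⟨Finset.univ.filter fun q => out q = q ∧ Conn B' p q, fun q hq =>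
    (Finset.mem_filter.1 hq).2.2, fun M => ?_⟩
  simp only [compEff]
  rw [← Multiset.sum_map_sum]
  refine congrArg _ (Multiset.map_congr rfl fun t _ => ?_)
  have hcond : ∀ q, (out q = q ∧ Conn B' p q) ∧ Conn B t.1 q ↔ q = out t.1 ∧ Conn B' t.1 p := by
    intro q
    rw [← hout_eq, and_right_comm, and_comm (a := out q = q), and_congr_right_iff]
    exact fun h => ⟨fun h' => ((h.1.mono hB).trans h'.symm), fun h' => h'.symm.trans (h.1.mono hB)⟩
  rw [← Finset.sum_filter, Finset.filter_filter, Finset.filter_congr fun q _ => hcond q,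
    Finset.sum_filter]
  simp only [ite_and, Finset.sum_ite_eq', Finset.mem_univ, if_true]

theorem compEff_nonneg_of_subset [Finite Q] (hB : B ⊆ B') {x : X}
    (h : ∀ p, 0 ≤ compEff B M p x) (p : Q) : 0 ≤ compEff B' M p x := by
  obtain ⟨s, -, hs⟩ := exists_representatives hB p
  rw [← hs, Finset.sum_apply]
  exact Finset.sum_nonneg fun q _ => h q

theorem sum_map_sum_nsmul {ι α β : Type*} [AddCommMonoid β] (s : Finset ι) (m : ι → ℕ) (g : ι → α)
    (f : α → β) : ((∑ i ∈ s, m i • ({g i} : Multiset α)).map f).sum = ∑ i ∈ s, m i • f (g i) := by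
  induction s using Finset.induction_on with
  | empty => simp
  | insert i s hi ih => simp [Finset.sum_insert hi, ih, Multiset.map_nsmul, Multiset.sum_nsmul]

theorem isCirculation_of_count_le
    (h : ∀ q, (M.map (·.1)).count q ≤ (M.map (·.2.2)).count q) : IsCirculation M :=
  Multiset.eq_of_le_of_card_le (Multiset.le_iff_count.2 h) (by simp)

/-- The linear system for a circulation on `A`. Its columns are the transitions in `A`; its rows are
the net inflow into each state and, for each active counter `x`, the effect on `x` in each
`B x`-component. -/
def circulationMatrix (A : Finset (Tr Q X)) (act : X → Prop) (B : X → Multiset (Tr Q X)) :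
    Q ⊕ (X × Q) → A → ℤ :=
  Sum.elim (fun q t => (if t.1.2.2 = q then 1 else 0) - if t.1.1 = q then 1 else 0)
    fun xq t => if act xq.1 ∧ Conn (B xq.1) t.1.1 xq.2 then t.1.2.1 xq.1 else 0

/-- The counter weights that a dual solution `y` puts on the `B x`-component of `q`. -/
def dualWeight [Fintype Q] (act : X → Prop) (B : X → Multiset (Tr Q X)) (y : Q ⊕ (X × Q) → ℕ)
    (x : X) (q : Q) : ℕ :=
  if act x then ∑ p, if Conn (B x) q p then y (.inr (x, p)) else 0 else 0

variable {A : Finset (Tr Q X)} {act : X → Prop} {C : X → Multiset (Tr Q X)}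

theorem isCirculation_of_circulationMatrix {m : A → ℕ}
    (h : ∀ q, 0 ≤ ∑ t, circulationMatrix A act C (.inl q) t * m t) :
    IsCirculation (∑ t, m t • ({t.1} : Multiset (Tr Q X))) := by
  have hcount : ∀ (f : Tr Q X → Q) (q : Q),
      (((∑ t, m t • ({t.1} : Multiset (Tr Q X))).map f).count q : ℤ) =
        ∑ t, (if f t.1 = q then 1 else 0) * (m t : ℤ) := fun f q => by
    rw [← Multiset.coe_countAddMonoidHom, ← Multiset.coe_mapAddMonoidHom, map_sum, map_sum]
    push_cast
    refine Finset.sum_congr rfl fun t _ => ?_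
    simp [Multiset.map_nsmul, Multiset.count_singleton, eq_comm]
  refine isCirculation_of_count_le fun q => ?_
  zify
  have := h q
  simp only [circulationMatrix, Sum.elim_inl, sub_mul, Finset.sum_sub_distrib] at this
  rw [hcount, hcount]
  exact sub_nonneg.1 this

theorem sum_circulationMatrix_inr {x : X} (hx : act x) (q : Q) (m : A → ℕ) :
    ∑ t, circulationMatrix A act C (.inr (x, q)) t * m t =
      compEff (C x) (∑ t, m t • ({t.1} : Multiset (Tr Q X))) q x := by
  rw [compEff, sum_map_sum_nsmul, Finset.sum_apply]
  refine Finset.sum_congr rfl fun t _ => ?_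
  by_cases ht : Conn (C x) t.1.1 q <;> simp [circulationMatrix, hx, ht, mul_comm]

theorem sum_mul_circulationMatrix [Fintype Q] [Fintype X] (y : Q ⊕ (X × Q) → ℕ) (t : A) :
    ∑ i, (y i : ℤ) * circulationMatrix A act C i t =
      y (.inl t.1.2.2) - y (.inl t.1.1) + ∑ x, dualWeight act C y x t.1.1 * t.1.2.1 x := by
  rw [Fintype.sum_sum_type, Fintype.sum_prod_type]
  congr 1
  · simp [circulationMatrix, mul_sub, Finset.sum_sub_distrib]
  · refine Finset.sum_congr rfl fun x _ => ?_
    by_cases hx : act x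
    · simp only [circulationMatrix, dualWeight, Sum.elim_inr, hx, true_and, if_true]
      push_cast
      simp only [Finset.sum_mul, mul_ite, ite_mul, mul_zero, zero_mul]
    · simp [circulationMatrix, dualWeight, hx]

theorem exists_circulation_and_ranking [Finite Q] [Fintype X] (A : Finset (Tr Q X))
    (act : X → Prop) (B : X → Multiset (Tr Q X)) :
    ∃ (N : Multiset (Tr Q X)) (z : Q → ℕ) (R : X → Q → ℕ), (∀ t ∈ N, t ∈ A) ∧ IsCirculation N ∧
      (∀ x, act x → ∀ p, 0 ≤ compEff (B x) N p x) ∧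
      (∀ x p q, Conn (B x) p q → R x p = R x q) ∧ (∀ x, ¬ act x → ∀ p, R x p = 0) ∧
      (∀ x, act x → ∀ p, 0 < R x p ∨ 0 < compEff (B x) N p x) ∧
      ∀ t ∈ A, (z t.2.2 : ℤ) + ∑ x, R x t.1 * t.2.1 x + (if t ∈ N then 0 else 1) ≤ z t.1 := by
  have := Fintype.ofFinite Q
  obtain ⟨m, y, hm, hy, hcol, hrow⟩ :=
    exists_strictly_complementary_nat (circulationMatrix A act B)
  have hmem : ∀ t, t ∈ ∑ t, m t • ({t.1} : Multiset (Tr Q X)) ↔ ∃ h : t ∈ A, 0 < m ⟨t, h⟩ := by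
    intro t
    simp [Multiset.mem_sum, Multiset.mem_nsmul, Nat.pos_iff_ne_zero, eq_comm]
  refine ⟨_, fun q => y (.inl q), dualWeight act B y, fun t ht => ((hmem t).1 ht).1,
    isCirculation_of_circulationMatrix fun q => hm (.inl q), fun x hx p => ?_, fun x p q h => ?_,
    fun x hx p => if_neg hx, fun x hx p => ?_, fun t ht => ?_⟩
  · exact sum_circulationMatrix_inr hx p m ▸ hm (.inr (x, p))
  · have hpq : ∀ r, Conn (B x) p r ↔ Conn (B x) q r := fun r =>
      ⟨fun h' => h.symm.trans h', fun h' => h.trans h'⟩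
    simp only [dualWeight, hpq]
  · refine (hrow (.inr (x, p))).imp (fun h => ?_) fun h => sum_circulationMatrix_inr hx p m ▸ h
    rw [dualWeight, if_pos hx]
    exact Finset.sum_pos' (fun _ _ => Nat.zero_le _)
      ⟨p, Finset.mem_univ p, h.trans_eq (if_pos (Conn.refl (B x) p)).symm⟩
  · have hsum := sum_mul_circulationMatrix (A := A) (act := act) (C := B) y ⟨t, ht⟩
    have hle := hsum ▸ hy ⟨t, ht⟩
    have hlt := hsum ▸ hcol ⟨t, ht⟩
    split_ifs with htN
    · linarith
    · have := hlt.resolve_left fun h => htN ((hmem t).2 ⟨ht, h⟩)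
      linarith

end Alternative

/-! ### The layers of a strongly connected set of transitions -/

section Layers

variable {Q X : Type*} {p₀ : Q} {a e e' : X → ℕ} {j l : ℕ}
  {M M' : ℕ → Multiset (Tr Q X)} {N : Multiset (Tr Q X)}
  {z : Q → ℕ} {R : X → Q → ℕ} {T₀ : Finset (Tr Q X)}

/-- State weights `z` and counter weights `R` whose potential `q, v ↦ z q + ∑ x, R x q * v x` bounds
how often a transition in layer `j` but not in layer `j + 1` can be taken. -/
structure IsRanking [Fintype X] (M : ℕ → Multiset (Tr Q X)) (a e : X → ℕ) (p₀ : Q) (j : ℕ)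
    (z : Q → ℕ) (R : X → Q → ℕ) : Prop where
  const : ∀ x p q, Conn (M (j + 1 - e x)) p q → R x p = R x q
  zero : ∀ x p, j + 1 < a x → R x p = 0
  pos : ∀ x p, e x = j + 1 → Conn (M 0) p₀ p → 0 < R x p
  decr : ∀ t ∈ M j,
    (z t.2.2 : ℤ) + ∑ x, R x t.1 * t.2.1 x + (if t ∈ M (j + 1) then 0 else 1) ≤ z t.1

/-- The layered decomposition, up to layer `l`, of a strongly connected set of transitions `T₀`
around the state `p₀`, when counter `x` starts with a value of order `n ^ a x`.

The circulation `M j` consists of the transitions that can be taken more often than `O(n ^ j)`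
times. The largest reachable value of `x` has order `n ^ e x` if `e x ≤ l`; the value `e x = l + 1`
is provisional. -/
structure Layers [Fintype X] (T₀ : Finset (Tr Q X)) (p₀ : Q) (a : X → ℕ) (l : ℕ)
    (M : ℕ → Multiset (Tr Q X)) (e : X → ℕ) : Prop where
  mem_zero : ∀ t, t ∈ M 0 ↔ t ∈ T₀
  subset : ∀ j < l, M (j + 1) ⊆ M j
  le_exp : ∀ x, a x ≤ e x
  exp_le : ∀ x, e x ≤ max (a x) (l + 1)
  circ : ∀ j ≤ l, IsCirculation (M j)
  /- A component of `M i` is left `O(n ^ i)` times, so between two departures layer `j` is executed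
  about `n ^ (j - i)` times there. A loss in `x` is therefore harmless iff `j - i < e x`, which is
  why no loss is allowed in the components of `M (j - e x)`. The truncated subtraction is intended:
  for `j ≤ e x` only the total effect matters. -/
  eff_nonneg : ∀ j ≤ l, ∀ x, a x ≤ j → ∀ p, 0 ≤ compEff (M (j - e x)) (M j) p x
  eff_pos : ∀ j ≤ l, ∀ x, a x ≤ j → j < e x → 0 < compEff (M 0) (M j) p₀ x
  exists_ranking : ∀ j < l, ∃ z R, IsRanking M a e p₀ j z R

theorem IsRanking.congr [Fintype X] (h : IsRanking M a e p₀ j z R) (hM : ∀ i ≤ j + 1, M' i = M i)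
    (he : ∀ x, j + 1 - e' x = j + 1 - e x) (he' : ∀ x, e' x = j + 1 → e x = j + 1) :
    IsRanking M' a e' p₀ j z R where
  const x := by
    rw [he x, hM _ (Nat.sub_le _ _)]
    exact h.const x
  zero := h.zero
  pos x := by
    rw [hM 0 (Nat.zero_le _)]
    exact fun p hx => h.pos x p (he' x hx)
  decr := by
    rw [hM j (Nat.le_succ j), hM _ le_rfl]
    exact h.decr

theorem exists_isCirculation_mem_iff
    (hT₀ : ∀ t ∈ T₀, ∃ w, IsWalk t.2.2 w t.1 ∧ ∀ t' ∈ w, t' ∈ T₀) :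
    ∃ N : Multiset (Tr Q X), IsCirculation N ∧ ∀ t, t ∈ N ↔ t ∈ T₀ := by
  choose! w hw hwT using hT₀
  refine ⟨∑ t ∈ T₀, (t :: w t : List (Tr Q X)), isCirculation_sum fun t ht =>
    IsWalk.isCirculation (p := t.1) ⟨rfl, hw t ht⟩, fun t => ?_⟩
  simp only [Multiset.mem_sum, Multiset.mem_coe, List.mem_cons]
  constructor
  · rintro ⟨s, hs, rfl | ht⟩
    exacts [hs, hwT s hs t ht]
  · exact fun ht => ⟨t, ht, .inl rfl⟩

theorem Layers.exists_zero [Fintype X] (p₀ : Q) (ha : ∀ x, 1 ≤ a x)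
    (hT₀ : ∀ t ∈ T₀, ∃ w, IsWalk t.2.2 w t.1 ∧ ∀ t' ∈ w, t' ∈ T₀) :
    ∃ M, Layers T₀ p₀ a 0 M a := by
  obtain ⟨N, hN, hmem⟩ := exists_isCirculation_mem_iff hT₀
  refine ⟨fun _ => N, hmem, by simp, fun _ => le_rfl, fun x => le_max_left _ _, fun _ _ => hN,
    fun j hj x hx => ?_, fun j hj x hx => ?_, by simp⟩ <;>
  · have := ha x
    omega

/-- The exponents after layer `l + 1` has been set to `N`: each counter with provisional exponent
`l + 1` that `N` increases gets the provisional exponent `l + 2`. -/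
def nextExp (M : ℕ → Multiset (Tr Q X)) (e : X → ℕ) (p₀ : Q) (l : ℕ) (N : Multiset (Tr Q X))
    (x : X) : ℕ :=
  if e x = l + 1 ∧ 0 < compEff (M 0) N p₀ x then l + 2 else e x

theorem nextExp_cases (M : ℕ → Multiset (Tr Q X)) (e : X → ℕ) (p₀ : Q) (l : ℕ)
    (N : Multiset (Tr Q X)) (x : X) :
    (nextExp M e p₀ l N x = e x ∧ ¬ (e x = l + 1 ∧ 0 < compEff (M 0) N p₀ x)) ∨
      nextExp M e p₀ l N x = l + 2 ∧ e x = l + 1 ∧ 0 < compEff (M 0) N p₀ x := by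
  by_cases h : e x = l + 1 ∧ 0 < compEff (M 0) N p₀ x
  exacts [.inr ⟨if_pos h, h⟩, .inl ⟨if_neg h, h⟩]

theorem sub_nextExp (hj : j ≤ l + 1) (x : X) : j - nextExp M e p₀ l N x = j - e x := by
  rcases nextExp_cases M e p₀ l N x with h | h <;> omega

theorem update_sub_nextExp (he : ∀ x, 1 ≤ e x) (hj : j ≤ l + 1) (x : X) :
    Function.update M (l + 1) N (j - nextExp M e p₀ l N x) = M (j - e x) := by
  rw [sub_nextExp hj, Function.update_of_ne]
  have := he x
  omega

theorem Layers.exists_next [Finite Q] [Fintype X] (ha : ∀ x, 1 ≤ a x) (H : Layers T₀ p₀ a l M e) :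
    ∃ N z R, N ⊆ M l ∧ IsCirculation N ∧
      (∀ x, a x ≤ l + 1 → ∀ p, 0 ≤ compEff (M (l + 1 - e x)) N p x) ∧
      IsRanking (Function.update M (l + 1) N) a (nextExp M e p₀ l N) p₀ l z R := by
  obtain ⟨N, z, R, hsub, hN, hnonneg, hconst, hzero, hpos, hdecr⟩ := exists_circulation_and_ranking
    (M l).toFinset (fun x => a x ≤ l + 1) fun x => M (l + 1 - e x)
  have hM_sub := update_sub_nextExp (M := M) (p₀ := p₀) (l := l) (N := N)
    (fun x => (ha x).trans (H.le_exp x)) le_rfl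
  refine ⟨N, z, R, fun t ht => Multiset.mem_toFinset.1 (hsub t ht), hN, hnonneg,
    fun x p q hpq => hconst x p q (hM_sub x ▸ hpq), fun x p hx => hzero x hx.not_ge p,
    fun x p hx hp => ?_, fun t ht => ?_⟩
  · obtain ⟨hex, hneg⟩ : e x = l + 1 ∧ ¬ 0 < compEff (M 0) N p₀ x := by
      have := nextExp_cases M e p₀ l N x
      grind
    have hB : M (l + 1 - e x) = M 0 := by rw [hex, Nat.sub_self]
    rw [Function.update_of_ne l.succ_ne_zero.symm, ← hB] at hp
    rw [← hB] at hneg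
    exact hconst x p₀ p hp ▸ (hpos x (hex ▸ H.le_exp x) p₀).resolve_right hneg
  · rw [Function.update_of_ne l.succ_ne_self.symm] at ht
    rw [Function.update_self]
    exact hdecr t (Multiset.mem_toFinset.2 ht)

theorem Layers.exists_succ [Finite Q] [Fintype X] (ha : ∀ x, 1 ≤ a x) (H : Layers T₀ p₀ a l M e) :
    ∃ M' e', Layers T₀ p₀ a (l + 1) M' e' := by
  obtain ⟨N, z, R, hsub, hN, hnonneg, hR⟩ := H.exists_next ha
  let M' := Function.update M (l + 1) N
  have he := nextExp_cases M e p₀ l N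
  have hM : ∀ i ≤ l, M' i = M i := fun i hi => Function.update_of_ne (by omega) _ _
  have hM_succ : M' (l + 1) = N := Function.update_self _ _ _
  have hM_zero : M' 0 = M 0 := hM 0 (Nat.zero_le l)
  have hle_succ : ∀ {P : ℕ → Prop}, (∀ j ≤ l, P j) → P (l + 1) → ∀ j ≤ l + 1, P j :=
    fun h h' j hj => (Nat.le_succ_iff.1 hj).elim (h j) fun h => h ▸ h'
  refine ⟨M', nextExp M e p₀ l N, hM_zero ▸ H.mem_zero, fun j hj => ?_, fun x => ?_, fun x => ?_,
    hle_succ (fun j hj => hM j hj ▸ H.circ j hj) (hM_succ ▸ hN),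
    fun j hj x hx p => ?_, hle_succ (fun j hj x hx hjx => ?_) fun x hx hlx => ?_, fun j hj => ?_⟩
  · rcases Nat.lt_succ_iff_lt_or_eq.1 hj with hj | rfl
    · exact hM _ hj ▸ hM _ hj.le ▸ H.subset j hj
    · exact hM_succ ▸ hM j le_rfl ▸ hsub
  · have := H.le_exp x
    rcases he x with h | h <;> omega
  · have := H.exp_le x
    rcases he x with h | h <;> omega
  · rw [show M' (j - _) = _ from update_sub_nextExp (fun x => (ha x).trans (H.le_exp x)) hj x]
    rcases Nat.le_succ_iff.1 hj with hj | rfl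
    · exact hM j hj ▸ H.eff_nonneg j hj x hx p
    · exact hM_succ ▸ hnonneg x hx p
  · rw [hM_zero, hM j hj]
    exact H.eff_pos j hj x hx (by rcases he x with h | h <;> omega)
  · rw [hM_zero, hM_succ]
    have := H.exp_le x
    grind
  · rcases Nat.lt_succ_iff_lt_or_eq.1 hj with hj | rfl
    · obtain ⟨z, R, hR⟩ := H.exists_ranking j hj
      refine ⟨z, R, hR.congr (fun i hi => hM i (hi.trans hj)) (sub_nextExp (by omega))
        fun x hx => ?_⟩
      rcases he x with h | h <;> omega
    · exact ⟨z, R, hR⟩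

theorem exists_layers [Finite Q] [Fintype X] (p₀ : Q) (ha : ∀ x, 1 ≤ a x)
    (hT₀ : ∀ t ∈ T₀, ∃ w, IsWalk t.2.2 w t.1 ∧ ∀ t' ∈ w, t' ∈ T₀) (l : ℕ) :
    ∃ M e, Layers T₀ p₀ a l M e := by
  induction l with
  | zero =>
    obtain ⟨M, H⟩ := Layers.exists_zero p₀ ha hT₀
    exact ⟨M, a, H⟩
  | succ l ih =>
    obtain ⟨M, e, H⟩ := ih
    exact H.exists_succ ha

end Layers

/-! ### Upper bounds from potentials -/

section Upper

variable {Q X : Type*} {T T₀ : Finset (Tr Q X)} {p₀ p q : Q} {v b : X → ℤ} {t : Tr Q X}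
  {w w' : List (Tr Q X)} {a e : X → ℕ} {j k l C : ℕ} {M : ℕ → Multiset (Tr Q X)} {z : Q → ℕ}
  {R : X → Q → ℕ}

/-- In the configuration `p, v`, the transitions in `w`, all of which belong to `T`, can be taken
one after the other and lead to the state `q`, no counter ever becoming negative. -/
structure Run (T : Finset (Tr Q X)) (p : Q) (v : X → ℤ) (w : List (Tr Q X)) (q : Q) : Prop where
  mem : ∀ t ∈ w, t ∈ T
  isWalk : IsWalk p w q
  executable : Executable w v

theorem run_append : Run T p v (w ++ w') q ↔ ∃ r, Run T p v w r ∧ Run T r (v + eff w) w' q := by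
  constructor
  · rintro ⟨hT, hw, hv⟩
    rw [List.forall_mem_append] at hT
    rw [executable_append] at hv
    obtain ⟨r, h, h'⟩ := isWalk_append.1 hw
    exact ⟨r, ⟨hT.1, h, hv.1⟩, hT.2, h', hv.2⟩
  · rintro ⟨r, h, h'⟩
    exact ⟨List.forall_mem_append.2 ⟨h.mem, h'.mem⟩, h.isWalk.append h'.isWalk,
      executable_append.2 ⟨h.executable, h'.executable⟩⟩

theorem Run.cons (ht : t ∈ T) (hv : 0 ≤ v) (h : Run T t.2.2 (v + t.2.1) w q) :
    Run T t.1 v (t :: w) q :=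
  ⟨List.forall_mem_cons.2 ⟨ht, h.mem⟩, ⟨rfl, h.isWalk⟩, hv, h.executable⟩

theorem Run.tail (h : Run T p v (t :: w) q) : Run T t.2.2 (v + t.2.1) w q :=
  ⟨(List.forall_mem_cons.1 h.mem).2, h.isWalk.2, h.executable.2⟩

/-- The number of transitions in `w` that do not belong to `M`. -/
def outside (M : Multiset (Tr Q X)) (w : List (Tr Q X)) : ℕ := w.countP fun t => t ∉ M

theorem outside_cons (M : Multiset (Tr Q X)) (t : Tr Q X) (w : List (Tr Q X)) [Decidable (t ∈ M)] :
    (outside M (t :: w) : ℤ) = outside M w + if t ∈ M then 0 else 1 := by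
  by_cases h : t ∈ M <;> simp [outside, h]

theorem outside_eq_zero {N : Multiset (Tr Q X)} (h : ∀ t ∈ w, t ∈ N) : outside N w = 0 :=
  List.countP_eq_zero.2 fun t ht => by simpa using h t ht

variable [Fintype X]

/-- The potential with state weights `z` and counter weights `R`. -/
def potential (z : Q → ℕ) (R : X → Q → ℕ) (q : Q) (v : X → ℤ) : ℤ := z q + ∑ x, R x q * v x

theorem potential_nonneg (hv : 0 ≤ v) : 0 ≤ potential z R q v :=
  add_nonneg (Int.natCast_nonneg _)
    (Finset.sum_nonneg fun x _ => mul_nonneg (Int.natCast_nonneg _) (hv x))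

theorem le_potential (hv : 0 ≤ v) {x : X} (hx : 0 < R x q) : v x ≤ potential z R q v :=
  calc v x ≤ R x q * v x := le_mul_of_one_le_left (hv x) (by exact_mod_cast hx)
    _ ≤ ∑ x, R x q * v x := Finset.single_le_sum (f := fun x => (R x q : ℤ) * v x)
        (fun x _ => mul_nonneg (Int.natCast_nonneg _) (hv x)) (Finset.mem_univ x)
    _ ≤ potential z R q v := le_add_of_nonneg_left (Int.natCast_nonneg _)

theorem potential_le {B : ℤ} (hB : 0 ≤ B) (hz : z q ≤ C) (hR : ∀ x, R x q ≤ C)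
    (hv : ∀ x, R x q ≠ 0 → v x ≤ B) : potential z R q v ≤ C + Fintype.card X * (C * B) := by
  refine add_le_add (by exact_mod_cast hz) ?_
  rw [← nsmul_eq_mul]
  refine Finset.sum_le_card_nsmul _ _ _ fun x _ => ?_
  by_cases hx : R x q = 0
  · rw [hx, Nat.cast_zero, zero_mul]
    positivity
  · exact (mul_le_mul_of_nonneg_left (hv x hx) (Int.natCast_nonneg _)).trans
      (mul_le_mul_of_nonneg_right (by exact_mod_cast hR x) hB)

theorem potential_add (z : Q → ℕ) (R : X → Q → ℕ) (t : Tr Q X) (v : X → ℤ) :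
    potential z R t.2.2 (v + t.2.1) = potential z R t.1 v +
      (z t.2.2 + ∑ x, R x t.1 * t.2.1 x - z t.1) +
      ∑ x, ((R x t.2.2 : ℤ) - R x t.1) * (v + t.2.1) x := by
  simp only [potential, Pi.add_apply, sub_mul, mul_add, Finset.sum_add_distrib,
    Finset.sum_sub_distrib]
  ring

/-- A bound on the increase of the potential along `w`: it can only increase when `w` leaves layer
`j`, and when the weight of a counter `x`, of value at most `b x`, changes. -/
def maxIncrease (M : ℕ → Multiset (Tr Q X)) (e : X → ℕ) (j C : ℕ) (b : X → ℤ)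
    (w : List (Tr Q X)) : ℤ :=
  ∑ x with e x ≤ j, C * b x * outside (M (j + 1 - e x)) w + C * outside (M j) w

theorem maxIncrease_cons (b : X → ℤ) (t : Tr Q X) (w : List (Tr Q X)) :
    maxIncrease M e j C b (t :: w) = maxIncrease M e j C b w +
      (∑ x with e x ≤ j, C * b x * (if t ∈ M (j + 1 - e x) then 0 else 1) +
        C * if t ∈ M j then 0 else 1) := by
  simp only [maxIncrease, outside_cons, mul_add, Finset.sum_add_distrib]
  ring

theorem IsRanking.weight_change_le (hR : IsRanking M a e p₀ j z R) (hC : ∀ x q, R x q ≤ C)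
    (ht : t ∈ M 0) (hv : 0 ≤ v) (hb : ∀ x, e x ≤ j → v x ≤ b x) :
    ∑ x, ((R x t.2.2 : ℤ) - R x t.1) * v x ≤
      ∑ x with e x ≤ j, C * b x * (if t ∈ M (j + 1 - e x) then 0 else 1) := by
  rw [Finset.sum_filter]
  refine Finset.sum_le_sum fun x _ => ?_
  by_cases hx : t ∈ M (j + 1 - e x)
  · simp [hR.const x _ _ (Conn.of_mem hx), hx]
  · have hxj : e x ≤ j := by
      by_contra h
      rw [show j + 1 - e x = 0 by omega] at hx
      exact hx ht
    rw [if_pos hxj, if_neg hx, mul_one]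
    refine mul_le_mul ?_ (hb x hxj) (hv x) (Int.natCast_nonneg _)
    have := hC x t.2.2
    omega

theorem Layers.potential_step (H : Layers T₀ p₀ a k M e) (hj : j < k)
    (hR : IsRanking M a e p₀ j z R) (hC : ∀ x q, R x q ≤ C)
    (hdrift : ∀ t ∈ T₀, (z t.2.2 : ℤ) + ∑ x, R x t.1 * t.2.1 x + 1 ≤ C) (ht : t ∈ T₀)
    (hv : 0 ≤ v + t.2.1) (hb : ∀ x, e x ≤ j → (v + t.2.1) x ≤ b x) :
    potential z R t.2.2 (v + t.2.1) + (if t ∈ M (j + 1) then 0 else 1) ≤ potential z R t.1 v +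
      (∑ x with e x ≤ j, C * b x * (if t ∈ M (j + 1 - e x) then 0 else 1) +
        C * if t ∈ M j then 0 else 1) := by
  have hchange := hR.weight_change_le hC ((H.mem_zero t).2 ht) hv hb
  have hstate : (z t.2.2 : ℤ) + ∑ x, R x t.1 * t.2.1 x + (if t ∈ M (j + 1) then 0 else 1) ≤
      z t.1 + C * if t ∈ M j then 0 else 1 := by
    by_cases htj : t ∈ M j
    · simpa [htj] using hR.decr t htj
    · rw [if_neg htj, if_neg fun h => htj (H.subset j hj h), mul_one]
      exact le_add_of_nonneg_of_le (Int.natCast_nonneg _) (hdrift t ht)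
  rw [potential_add]
  linarith

theorem Layers.potential_run (H : Layers T₀ p₀ a k M e) (hj : j < k)
    (hR : IsRanking M a e p₀ j z R) (hC : ∀ x q, R x q ≤ C)
    (hdrift : ∀ t ∈ T₀, (z t.2.2 : ℤ) + ∑ x, R x t.1 * t.2.1 x + 1 ≤ C)
    (hb : ∀ w q, Run T₀ p v w q → ∀ x, e x ≤ j → (v + eff w) x ≤ b x) (h : Run T₀ p v w q) :
    potential z R q (v + eff w) + outside (M (j + 1)) w ≤
      potential z R p v + maxIncrease M e j C b w := by
  induction w generalizing p v with
  | nil =>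
    obtain rfl : p = q := h.isWalk
    simp [maxIncrease, outside]
  | cons t w ih =>
    obtain rfl : t.1 = p := h.isWalk.1
    have ht : t ∈ T₀ := h.mem t List.mem_cons_self
    have htail : ∀ {w q}, Run T₀ t.2.2 (v + t.2.1) w q → Run T₀ t.1 v (t :: w) q :=
      Run.cons ht h.executable.nonneg
    have hih := ih (fun w q hw => by simpa [add_assoc] using hb _ q (htail hw)) h.tail
    have hstep := H.potential_step hj hR hC hdrift ht h.tail.executable.nonneg fun x hx => by
      simpa using hb [t] _ (htail (w := []) ⟨by simp, rfl, h.tail.executable.nonneg⟩) x hx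
    rw [maxIncrease_cons, outside_cons, eff_cons,
      show v + (t.2.1 + eff w) = v + t.2.1 + eff w from (add_assoc _ _ _).symm]
    linarith

theorem exists_weight_bound [Finite Q] (T₀ : Finset (Tr Q X)) (z : Q → ℕ) (R : X → Q → ℕ) :
    ∃ C : ℕ, (∀ q, z q ≤ C) ∧ (∀ x q, R x q ≤ C) ∧
      ∀ t ∈ T₀, (z t.2.2 : ℤ) + ∑ x, R x t.1 * t.2.1 x + 1 ≤ C := by
  obtain ⟨Cz, hz⟩ := Finite.exists_le z
  obtain ⟨CR, hCR⟩ := Finite.exists_le fun xq : X × Q => R xq.1 xq.2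
  obtain ⟨Ct, hCt⟩ := Finset.exists_le
    (T₀.image fun t => ((z t.2.2 : ℤ) + ∑ x, (R x t.1 : ℤ) * t.2.1 x + 1).toNat)
  refine ⟨Cz + CR + Ct, fun q => (hz q).trans (by omega), fun x q => (hCR (x, q)).trans ?_,
    fun t ht => ?_⟩
  · change CR ≤ _
    omega
  · have := hCt _ (Finset.mem_image_of_mem _ ht)
    omega

theorem maxIncrease_le {n K : ℕ} (hn : 1 ≤ n) (he : ∀ x, 1 ≤ e x)
    (hK : ∀ i ≤ j, (outside (M i) w : ℤ) ≤ K * (n : ℤ) ^ i) :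
    maxIncrease M e j C (fun x => K * (n : ℤ) ^ e x) w ≤
      (Fintype.card X * (C * K * K) + C * K) * (n : ℤ) ^ (j + 1) := by
  have hn : (1 : ℤ) ≤ n := by exact_mod_cast hn
  rw [add_mul]
  refine add_le_add ?_ ?_
  · rw [Finset.sum_filter, mul_assoc, ← nsmul_eq_mul]
    refine Finset.sum_le_card_nsmul _ _ _ fun x _ => ?_
    split_ifs with hx
    · calc C * (K * (n : ℤ) ^ e x) * outside (M (j + 1 - e x)) w
          ≤ C * (K * (n : ℤ) ^ e x) * (K * (n : ℤ) ^ (j + 1 - e x)) := by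
            gcongr
            exact hK _ (by have := he x; omega)
        _ = C * K * K * ((n : ℤ) ^ e x * (n : ℤ) ^ (j + 1 - e x)) := by ring
        _ = C * K * K * (n : ℤ) ^ (j + 1) := by rw [← pow_add, Nat.add_sub_cancel' (by omega)]
    · positivity
  · calc (C : ℤ) * outside (M j) w ≤ C * (K * (n : ℤ) ^ j) := by
          gcongr
          exact hK j le_rfl
      _ ≤ C * (K * (n : ℤ) ^ (j + 1)) := by gcongr; exact Nat.le_succ j
      _ = C * K * (n : ℤ) ^ (j + 1) := by ring

theorem Layers.exists_potential_bound [Finite Q] (H : Layers T₀ p₀ a k M e) (ha : ∀ x, 1 ≤ a x)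
    (hj : j < k) (hR : IsRanking M a e p₀ j z R) (B K : ℕ) :
    ∃ K' : ℕ, ∀ n : ℕ, 1 ≤ n → ∀ v : X → ℤ, (∀ x, a x ≤ k → v x ≤ B * (n : ℤ) ^ a x) →
      (∀ w q, Run T₀ p₀ v w q → (∀ x, e x ≤ j → (v + eff w) x ≤ K * (n : ℤ) ^ e x) ∧
        ∀ i ≤ j, (outside (M i) w : ℤ) ≤ K * (n : ℤ) ^ i) →
      ∀ w q, Run T₀ p₀ v w q →
        potential z R q (v + eff w) + outside (M (j + 1)) w ≤ K' * (n : ℤ) ^ (j + 1) := by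
  obtain ⟨C, hzC, hRC, hdrift⟩ := exists_weight_bound T₀ z R
  let c := Fintype.card X
  refine ⟨C + c * (C * B) + (c * (C * K * K) + C * K), fun n hn v hv hK w q h => ?_⟩
  have hn' : (1 : ℤ) ≤ n := by exact_mod_cast hn
  have hstart : potential z R p₀ v ≤ (C + c * (C * B)) * (n : ℤ) ^ (j + 1) := by
    have hv' : ∀ x, R x p₀ ≠ 0 → v x ≤ B * (n : ℤ) ^ (j + 1) := fun x hx => by
      have hax : a x ≤ j + 1 := not_lt.1 fun h => hx (hR.zero x p₀ h)
      exact (hv x (hax.trans hj)).trans (by gcongr)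
    have := potential_le (by positivity) (hzC p₀) (fun x => hRC x p₀) hv'
    have := le_mul_of_one_le_right (Int.natCast_nonneg C) (one_le_pow₀ hn' (n := j + 1))
    linarith
  have hrun := H.potential_run hj hR hRC hdrift (fun w q h => (hK w q h).1) h
  have hinc := maxIncrease_le (C := C) hn (fun x => (ha x).trans (H.le_exp x)) (hK w q h).2
  push_cast
  linarith

theorem Layers.exists_bound [Finite Q] (H : Layers T₀ p₀ a k M e) (ha : ∀ x, 1 ≤ a x) (B : ℕ)
    (hl : l ≤ k) :
    ∃ K : ℕ, ∀ n : ℕ, 1 ≤ n → ∀ v : X → ℤ, (∀ x, a x ≤ k → v x ≤ B * (n : ℤ) ^ a x) →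
      ∀ w q, Run T₀ p₀ v w q → (∀ x, e x ≤ l → (v + eff w) x ≤ K * (n : ℤ) ^ e x) ∧
        ∀ j ≤ l, (outside (M j) w : ℤ) ≤ K * (n : ℤ) ^ j := by
  induction l with
  | zero =>
    refine ⟨0, fun n _ v _ w q h => ⟨fun x hx => ?_, fun j hj => ?_⟩⟩
    · have := (ha x).trans (H.le_exp x)
      omega
    · rw [Nat.le_zero.1 hj, outside_eq_zero fun t ht => (H.mem_zero t).2 (h.mem t ht)]
      simp
  | succ l ih =>
    obtain ⟨K, hK⟩ := ih (Nat.le_of_succ_le hl)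
    obtain ⟨z, R, hR⟩ := H.exists_ranking l hl
    obtain ⟨K', hK'⟩ := H.exists_potential_bound ha hl hR B K
    refine ⟨K + K', fun n hn v hv w q h => ?_⟩
    obtain ⟨hval, hout⟩ := hK n hn v hv w q h
    have hpot := hK' n hn v hv (hK n hn v hv) w q h
    have hnonneg := h.executable.nonneg_end
    have hK_le : ∀ i, (K : ℤ) * n ^ i ≤ (K + K' : ℕ) * n ^ i := fun i => by gcongr; omega
    have hK'_le : (K' : ℤ) * n ^ (l + 1) ≤ (K + K' : ℕ) * n ^ (l + 1) := by gcongr; omega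
    refine ⟨fun x hx => ?_, fun j hj => ?_⟩
    · rcases Nat.le_add_one_iff.1 hx with hx | hx
      · exact (hval x hx).trans (hK_le _)
      · have hconn : Conn (M 0) p₀ q := h.isWalk.conn fun t ht => (H.mem_zero t).2 (h.mem t ht)
        rw [hx]
        have := le_potential (z := z) hnonneg (hR.pos x q hx hconn)
        omega
    · rcases Nat.le_add_one_iff.1 hj with hj | rfl
      · exact (hout j hj).trans (hK_le _)
      · have := potential_nonneg (z := z) (R := R) (q := q) hnonneg
        omega

end Upper

/-! ### Lower bounds from pumping -/

section Lower

variable {Q X : Type*} {T₀ : Finset (Tr Q X)} {p₀ p : Q} {w : List (Tr Q X)}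
  {a e f : X → ℕ} {i j k l m s d K K' : ℕ} {M : ℕ → Multiset (Tr Q X)}
  {N : Multiset (Tr Q X)} {x : X}

theorem IsCirculation.exists_walk [Finite Q] [Finite X] (hN : IsCirculation N) :
    ∃ D : ℕ, ∀ (p : Q) (s : Finset Q) (c : Q → List (Tr Q X)) (E : X → ℤ),
      (∀ q ∈ s, Conn N p q) → (∀ q ∈ s, IsWalk q (c q) q) → (∀ q ∈ s, Executable (c q) E) →
      ∃ w, IsWalk p w p ∧ (∀ t ∈ w, t ∈ N ∨ ∃ q ∈ s, t ∈ c q) ∧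
        eff w = compEff N N p + ∑ q ∈ s, eff (c q) ∧
        Executable w ((fun _ => (D : ℤ)) + s.card • E) := by
  choose w hw hcoe hvisits using hN.exists_euler_circuit
  choose D hD using fun p => exists_executable_const (w p)
  obtain ⟨D', hD'⟩ := Finite.exists_le D
  refine ⟨D', fun p s c E hs hc hE => ?_⟩
  obtain ⟨w', hw', hcoe', hexec⟩ := (hw p).exists_insert_finset
    ((hD p).mono fun _ => Int.ofNat_le.2 (hD' p)) s c (fun q hq => hvisits p q (hs q hq)) hc hE
  refine ⟨w', hw', fun t ht => ?_, ?_, hexec⟩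
  · rw [← Multiset.mem_coe, hcoe', hcoe, Multiset.mem_add, Multiset.mem_filter,
      Multiset.mem_sum] at ht
    exact ht.imp And.left fun ⟨q, hq, ht⟩ => ⟨q, hq, ht⟩
  · have heff : ∀ l : List (Tr Q X), eff l = Multiset.sumAddMonoidHom
        (Multiset.mapAddMonoidHom (fun t : Tr Q X => t.2.1) l) := fun l => by simp [eff]
    simp only [← eff_eq_compEff (hcoe p), heff, hcoe', map_add, map_sum]

/-- The exponents reached after `l` rounds of pumping. -/
def pumpExp (a e : X → ℕ) (l : ℕ) (x : X) : ℕ := min (e x) (max (a x) l)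

/-- The effect of executing, around the state `p`, layer `i + s` of `M` about `m ^ s` times for all
`s < d`. -/
def blockEff (M : ℕ → Multiset (Tr Q X)) (i d m : ℕ) (p : Q) : X → ℤ :=
  ∑ s ∈ Finset.range d, m ^ s • compEff (M i) (M (i + s)) p

theorem blockEff_succ {R : Finset Q}
    (hR : ∀ N, ∑ q ∈ R, compEff (M (i + 1)) N q = compEff (M i) N p) :
    blockEff M i (d + 1) m p =
      compEff (M i) (M i) p + ∑ q ∈ R, m • blockEff M (i + 1) d m q := by
  simp only [blockEff, Finset.sum_range_succ', pow_zero, one_smul, add_zero, Finset.smul_sum]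
  rw [add_comm, Finset.sum_comm]
  refine congrArg _ (Finset.sum_congr rfl fun s _ => ?_)
  rw [← hR, Finset.smul_sum, add_assoc, add_comm 1 s]
  exact Finset.sum_congr rfl fun q _ => by rw [smul_smul, ← pow_succ']

theorem executable_rep_of_neg_le (hf : ∀ x, 1 ≤ f x)
    (h : Executable w fun x => K * (m : ℤ) ^ f x)
    (hw : ∀ x, -(K' * (m : ℤ) ^ (f x - 1)) ≤ eff w x) :
    Executable (rep m w) fun x => (K + K' : ℕ) * (m : ℤ) ^ f x := by
  refine (h.rep (E := fun x => K' * (m : ℤ) ^ (f x - 1)) (fun x => by positivity)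
    (fun x => neg_le_iff_add_nonneg'.1 (hw x)) m).mono fun x => le_of_eq ?_
  change (K : ℤ) * m ^ f x + m • ((K' : ℤ) * m ^ (f x - 1)) = _
  rw [nsmul_eq_mul, mul_left_comm, mul_pow_sub_one (by have := hf x; omega)]
  push_cast
  ring

theorem natCast_le_mul_pow (D f : ℕ) (hm : 1 ≤ m) : (D : ℤ) ≤ D * (m : ℤ) ^ f :=
  le_mul_of_one_le_right (Int.natCast_nonneg D) (one_le_pow₀ (by exact_mod_cast hm))

section Layers

variable [Fintype X]

theorem Layers.subset_of_le (H : Layers T₀ p₀ a k M e) (hij : i ≤ j) (hj : j ≤ k) :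
    M j ⊆ M i := by
  induction j, hij using Nat.le_induction with
  | base => exact fun _ h => h
  | succ j _ ih => exact fun _ h => ih (Nat.le_of_succ_le hj) (H.subset j hj h)

theorem Layers.one_le_pumpExp (H : Layers T₀ p₀ a k M e) (ha : ∀ x, 1 ≤ a x) (l : ℕ) (x : X) :
    1 ≤ pumpExp a e l x :=
  le_min ((ha x).trans (H.le_exp x)) (le_max_of_le_left (ha x))

theorem Layers.neg_le_pow_mul_compEff [Finite Q] (H : Layers T₀ p₀ a k M e) (ha : ∀ x, 1 ≤ a x)
    (hl : l ≤ k) (his : i + s ≤ l) {C : ℕ} (hC : -(C : ℤ) ≤ compEff (M i) (M (i + s)) p x)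
    (hm : 1 ≤ m) :
    -(C * (m : ℤ) ^ (pumpExp a e l x - 1)) ≤ (m : ℤ) ^ s * compEff (M i) (M (i + s)) p x := by
  by_cases hs : s ≤ pumpExp a e l x - 1
  · calc -(C * (m : ℤ) ^ (pumpExp a e l x - 1)) ≤ -(C * (m : ℤ) ^ s) := by gcongr; omega
      _ = (m : ℤ) ^ s * -(C : ℤ) := by ring
      _ ≤ (m : ℤ) ^ s * compEff (M i) (M (i + s)) p x := by gcongr
  · have hae := H.le_exp x
    have hax := ha x
    have hnonneg : 0 ≤ compEff (M i) (M (i + s)) p x := by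
      unfold pumpExp at hs
      exact compEff_nonneg_of_subset (H.subset_of_le (by omega) (by omega))
        (H.eff_nonneg (i + s) (his.trans hl) x (by omega)) p
    have : (0 : ℤ) ≤ C * (m : ℤ) ^ (pumpExp a e l x - 1) := by positivity
    have := mul_nonneg (pow_nonneg (Int.natCast_nonneg m) s) hnonneg
    omega

theorem Layers.exists_neg_le_blockEff [Finite Q] (H : Layers T₀ p₀ a k M e) (ha : ∀ x, 1 ≤ a x)
    (hl : l ≤ k) :
    ∃ K : ℕ, ∀ m : ℕ, 1 ≤ m → ∀ i d, i + d ≤ l + 1 → ∀ p x,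
      -(K * (m : ℤ) ^ (pumpExp a e l x - 1)) ≤ blockEff M i d m p x := by
  obtain ⟨C, hC⟩ := Finite.exists_le fun y : Fin (l + 1) × Fin (l + 1) × Q × X =>
    (compEff (M y.1) (M y.2.1) y.2.2.1 y.2.2.2).natAbs
  refine ⟨(l + 1) * C, fun m hm i d hid p x => ?_⟩
  have hterm : ∀ s ∈ Finset.range d, -(C * (m : ℤ) ^ (pumpExp a e l x - 1)) ≤
      (m : ℤ) ^ s * compEff (M i) (M (i + s)) p x := fun s hs => by
    rw [Finset.mem_range] at hs
    have := hC (⟨i, by omega⟩, ⟨i + s, by omega⟩, p, x)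
    exact H.neg_le_pow_mul_compEff ha hl (by omega) (by simp only at this; omega) hm
  calc -(((l + 1) * C : ℕ) * (m : ℤ) ^ (pumpExp a e l x - 1))
      = -((l + 1 : ℕ) * (C * (m : ℤ) ^ (pumpExp a e l x - 1))) := by push_cast; ring
    _ ≤ -(d * (C * (m : ℤ) ^ (pumpExp a e l x - 1))) := by gcongr; omega
    _ = (Finset.range d).card • -(C * (m : ℤ) ^ (pumpExp a e l x - 1)) := by simp
    _ ≤ ∑ s ∈ Finset.range d, (m : ℤ) ^ s * compEff (M i) (M (i + s)) p x :=
        Finset.card_nsmul_le_sum _ _ _ hterm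
    _ = blockEff M i d m p x := by simp [blockEff, Finset.sum_apply]

/-- The block for the layers `i, …, i + d`: copies of the blocks for the layers from `i + 1` on, one
in each component of `M (i + 1)`, are inserted into an Eulerian circuit of layer `i`. -/
theorem Layers.exists_block [Finite Q] (H : Layers T₀ p₀ a k M e) (ha : ∀ x, 1 ≤ a x) (hl : l ≤ k)
    (hid : i + d = l) :
    ∃ K : ℕ, ∀ m : ℕ, 1 ≤ m → ∀ p, ∃ w, IsWalk p w p ∧ (∀ t ∈ w, t ∈ M i) ∧
      eff w = blockEff M i (d + 1) m p ∧
      Executable w fun x => K * (m : ℤ) ^ pumpExp a e l x := by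
  induction d generalizing i with
  | zero =>
    obtain ⟨D, hD⟩ := (H.circ i (by omega)).exists_walk
    refine ⟨D, fun m hm p => ?_⟩
    obtain ⟨w, hw, hmem, heff, hexec⟩ := hD p ∅ (fun _ => []) 0 (by simp) (by simp) (by simp)
    exact ⟨w, hw, fun t ht => by simpa using hmem t ht, by simp [heff, blockEff],
      hexec.mono fun x => by simpa using natCast_le_mul_pow D _ hm⟩
  | succ d ih =>
    obtain ⟨D, hD⟩ := (H.circ i (by omega)).exists_walk
    obtain ⟨K, hK⟩ := ih (i := i + 1) (by omega)
    obtain ⟨K', hK'⟩ := H.exists_neg_le_blockEff ha hl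
    have := Fintype.ofFinite Q
    refine ⟨D + Fintype.card Q * (K + K'), fun m hm p => ?_⟩
    choose w hw hmem heff hexec using hK m hm
    obtain ⟨R, hRconn, hR⟩ := exists_representatives (H.subset i (by omega)) p
    obtain ⟨w', hw', hmem', heff', hexec'⟩ := hD p R (fun q => rep m (w q))
      (fun x => (K + K' : ℕ) * (m : ℤ) ^ pumpExp a e l x) hRconn (fun q _ => (hw q).rep m)
      fun q _ => executable_rep_of_neg_le (H.one_le_pumpExp ha l) (hexec q) fun x =>
        heff q ▸ hK' m hm (i + 1) (d + 1) (by omega) q x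
    refine ⟨w', hw', fun t ht => ?_, ?_, hexec'.mono fun x => ?_⟩
    · rcases hmem' t ht with ht | ⟨q, -, ht⟩
      exacts [ht, H.subset i (by omega) (hmem q t (mem_of_mem_rep ht))]
    · simp only [heff', eff_rep, heff, blockEff_succ hR]
    · have hcard : R.card ≤ Fintype.card Q := Finset.card_le_univ R
      calc (D : ℤ) + (R.card • fun x => (K + K' : ℕ) * (m : ℤ) ^ pumpExp a e l x) x
          = D + R.card * ((K + K' : ℕ) * (m : ℤ) ^ pumpExp a e l x) := by simp
        _ ≤ D * (m : ℤ) ^ pumpExp a e l x +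
            Fintype.card Q * ((K + K' : ℕ) * (m : ℤ) ^ pumpExp a e l x) := by
          gcongr
          exact natCast_le_mul_pow D _ hm
        _ = (D + Fintype.card Q * (K + K') : ℕ) * (m : ℤ) ^ pumpExp a e l x := by
          push_cast; ring

theorem Layers.exists_pump [Finite Q] (H : Layers T₀ p₀ a k M e) (ha : ∀ x, 1 ≤ a x)
    (hl : l ≤ k) :
    ∃ K : ℕ, ∀ m : ℕ, 1 ≤ m → ∃ w, IsWalk p₀ w p₀ ∧ (∀ t ∈ w, t ∈ T₀) ∧
      (Executable w fun x => K * (m : ℤ) ^ pumpExp a e l x) ∧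
      ∀ x, a x ≤ l → l < e x → (m : ℤ) ^ (l + 1) ≤ K * (m : ℤ) ^ l + eff w x := by
  obtain ⟨K, hK⟩ := H.exists_block ha hl (zero_add l)
  obtain ⟨K', hK'⟩ := H.exists_neg_le_blockEff ha hl
  refine ⟨K + K', fun m hm => ?_⟩
  obtain ⟨w, hw, hmem, heff, hexec⟩ := hK m hm p₀
  refine ⟨rep m w, hw.rep m, fun t ht => (H.mem_zero t).1 (hmem t (mem_of_mem_rep ht)),
    executable_rep_of_neg_le (H.one_le_pumpExp ha l) hexec fun x =>
      heff ▸ hK' m hm 0 (l + 1) (by omega) p₀ x,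
    fun x hax hex => ?_⟩
  have hl1 : 1 ≤ l := (ha x).trans hax
  have hexp : pumpExp a e l x = l := by
    unfold pumpExp
    omega
  have hlow := hK' m hm 0 l (by omega) p₀ x
  rw [hexp] at hlow
  have htop : (m : ℤ) ^ l ≤ (m : ℤ) ^ l * compEff (M 0) (M l) p₀ x :=
    le_mul_of_one_le_right (by positivity) (H.eff_pos l hl x hax hex)
  have hsplit : eff w x = blockEff M 0 l m p₀ x + (m : ℤ) ^ l * compEff (M 0) (M l) p₀ x := by
    simp [heff, blockEff, Finset.sum_range_succ]
  calc (m : ℤ) ^ (l + 1) = m * (m : ℤ) ^ l := pow_succ' _ _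
    _ ≤ m * (K' * (m : ℤ) ^ (l - 1) + eff w x) := by gcongr; linarith
    _ = K' * (m : ℤ) ^ l + m * eff w x := by rw [mul_add, mul_left_comm, mul_pow_sub_one (by omega)]
    _ ≤ (K + K' : ℕ) * (m : ℤ) ^ l + eff (rep m w) x := by
      simp only [eff_rep, Pi.smul_apply, nsmul_eq_mul]
      gcongr
      omega

end Layers

end Lower

/-! ### Attainable exponents -/

section Attains

variable {Q X : Type*} {T T₀ : Finset (Tr Q X)} {p₀ p q r : Q} {w : List (Tr Q X)}
  {a b c e : X → ℕ} {k l : ℕ} {M : ℕ → Multiset (Tr Q X)}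

/-- Whenever each counter `x` has a value of order at least `n ^ a x` at `p`, some run to `q` makes
each counter `x` simultaneously reach order `n ^ b x`. -/
def Attains (T : Finset (Tr Q X)) (p q : Q) (a b : X → ℕ) : Prop :=
  ∀ B : ℕ, ∃ K N : ℕ, ∀ n ≥ N, ∀ v : X → ℤ, (∀ x, (n : ℤ) ^ a x ≤ B * v x) →
    ∃ w, Run T p v w q ∧ ∀ x, (n : ℤ) ^ b x ≤ K * (v + eff w) x

theorem pos_of_pow_le {n f B : ℕ} {y : ℤ} (hn : 1 ≤ n) (h : (n : ℤ) ^ f ≤ B * y) :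
    0 < B ∧ 0 < y := by
  have hpos : 0 < B * y := (pow_pos (by exact_mod_cast hn) f).trans_le h
  have hy : 0 < y := pos_of_mul_pos_right hpos (Int.natCast_nonneg B)
  exact ⟨by exact_mod_cast pos_of_mul_pos_left hpos hy.le, hy⟩

theorem Attains.refl (T : Finset (Tr Q X)) (p : Q) (a : X → ℕ) : Attains T p p a a := fun B =>
  ⟨B, 1, fun n hn v hv => ⟨[], ⟨by simp, rfl, fun x => (pos_of_pow_le hn (hv x)).2.le⟩,
    by simpa using hv⟩⟩

theorem Attains.trans (h : Attains T p q a b) (h' : Attains T q r b c) : Attains T p r a c := by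
  intro B
  obtain ⟨K, N, hK⟩ := h B
  obtain ⟨K', N', hK'⟩ := h' K
  refine ⟨K', max N N', fun n hn v hv => ?_⟩
  obtain ⟨w, hw, hb⟩ := hK n (le_of_max_le_left hn) v hv
  obtain ⟨w', hw', hc⟩ := hK' n (le_of_max_le_right hn) _ hb
  exact ⟨w ++ w', run_append.2 ⟨q, hw, hw'⟩, by rwa [eff_append, ← add_assoc]⟩

theorem Attains.mono (h : Attains T₀ p q a b) (hT : T₀ ⊆ T) : Attains T p q a b := fun B => by
  obtain ⟨K, N, hK⟩ := h B
  refine ⟨K, N, fun n hn v hv => ?_⟩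
  obtain ⟨w, hw, hb⟩ := hK n hn v hv
  exact ⟨w, ⟨fun t ht => hT (hw.mem t ht), hw.isWalk, hw.executable⟩, hb⟩

theorem Executable.le_two_mul_add_eff {u v : X → ℤ} (h : Executable w u)
    (hv : ∀ x, 2 * u x ≤ v x) (x : X) : v x ≤ 2 * (v + eff w) x := by
  have hend : 0 ≤ u x + eff w x := h.nonneg_end x
  rw [Pi.add_apply]
  linarith [hv x]

theorem two_mul_pow_div_le {n f B K : ℕ} {y : ℤ} (hf : 1 ≤ f) (hB : 0 < B)
    (h : (n : ℤ) ^ f ≤ B * y) : 2 * (K * ((n / (2 * B * K + 1) : ℕ) : ℤ) ^ f) ≤ y := by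
  have hB : (0 : ℤ) < B := by exact_mod_cast hB
  let c := 2 * B * K + 1
  refine le_of_mul_le_mul_left ?_ hB
  calc (B : ℤ) * (2 * (K * ((n / c : ℕ) : ℤ) ^ f)) = (2 * B * K : ℕ) * ((n / c : ℕ) : ℤ) ^ f := by
        push_cast; ring
    _ ≤ c ^ f * ((n / c : ℕ) : ℤ) ^ f := by
        gcongr
        exact_mod_cast (Nat.le_succ _).trans (Nat.le_self_pow (by omega) c)
    _ = ((c * (n / c) : ℕ) : ℤ) ^ f := by push_cast; rw [mul_pow]
    _ ≤ (n : ℤ) ^ f := by gcongr; exact Nat.mul_div_le n c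
    _ ≤ B * y := h

theorem le_two_mul_mul_div {n c : ℕ} (hc : 0 < c) (hn : c ≤ n) : n ≤ 2 * c * (n / c) := by
  have hlt := Nat.lt_mul_div_succ n hc
  have hle := Nat.le_mul_of_pos_right c (Nat.div_pos hn hc)
  rw [mul_add_one] at hlt
  rw [mul_assoc]
  omega

variable [Finite Q] [Fintype X]

/-- The cycle of `Layers.exists_pump` is run with `m = n / c`, where `c` is so large that no counter
ever loses more than half of its value. -/
theorem Layers.attains_pumpExp_succ (H : Layers T₀ p₀ a k M e) (ha : ∀ x, 1 ≤ a x) (hl : l ≤ k) :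
    Attains T₀ p₀ p₀ (pumpExp a e l) (pumpExp a e (l + 1)) := by
  intro B
  obtain ⟨K, hK⟩ := H.exists_pump ha hl
  let c := 2 * B * K + 1
  have hc : 0 < c := Nat.succ_pos _
  refine ⟨2 * B + (2 * c) ^ (l + 1), c, fun n hn v hv => ?_⟩
  let m := n / c
  obtain ⟨w, hw, hmem, hexec, hgain⟩ := hK m (Nat.div_pos hn hc)
  have hv2 : ∀ x, 2 * (K * (m : ℤ) ^ pumpExp a e l x) ≤ v x := fun x =>
    two_mul_pow_div_le (H.one_le_pumpExp ha l x) (pos_of_pow_le (hc.trans_le hn) (hv x)).1 (hv x)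
  have hcost : ∀ x, 0 ≤ K * (m : ℤ) ^ pumpExp a e l x := hexec.nonneg
  have hend : ∀ x, v x ≤ 2 * (v + eff w) x := hexec.le_two_mul_add_eff hv2
  have hv0 : ∀ x, 0 ≤ (v + eff w) x := fun x => by linarith [hv2 x, hcost x, hend x]
  refine ⟨w, ⟨hmem, hw, hexec.mono fun x => by linarith [hv2 x, hcost x]⟩, fun x => ?_⟩
  have hae := H.le_exp x
  by_cases hx : a x ≤ l ∧ l < e x
  · have hexp : pumpExp a e l x = l := by unfold pumpExp; omega
    have hexp' : pumpExp a e (l + 1) x = l + 1 := by unfold pumpExp; omega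
    have hm : (m : ℤ) ^ (l + 1) ≤ (v + eff w) x := by
      rw [Pi.add_apply]
      linarith [hgain x hx.1 hx.2, hexp ▸ hv2 x, hexp ▸ hcost x]
    calc (n : ℤ) ^ pumpExp a e (l + 1) x ≤ ((2 * c * m : ℕ) : ℤ) ^ (l + 1) := by
          rw [hexp']
          gcongr
          exact le_two_mul_mul_div hc hn
      _ = (2 * c) ^ (l + 1) * (m : ℤ) ^ (l + 1) := by push_cast; rw [mul_pow]
      _ ≤ (2 * B + (2 * c) ^ (l + 1) : ℕ) * (v + eff w) x := by
          have := hv0 x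
          gcongr
          push_cast
          exact le_add_of_nonneg_left (by positivity)
  · have hexp : pumpExp a e (l + 1) x = pumpExp a e l x := by unfold pumpExp; omega
    calc (n : ℤ) ^ pumpExp a e (l + 1) x ≤ B * v x := hexp ▸ hv x
      _ ≤ B * (2 * (v + eff w) x) := by gcongr; exact hend x
      _ = (2 * B : ℕ) * (v + eff w) x := by push_cast; ring
      _ ≤ (2 * B + (2 * c) ^ (l + 1) : ℕ) * (v + eff w) x := by
          have := hv0 x
          gcongr
          exact Nat.le_add_right _ _

theorem Layers.attains (H : Layers T₀ p₀ a k M e) (ha : ∀ x, 1 ≤ a x) : Attains T₀ p₀ p₀ a e := by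
  have hrounds : ∀ l ≤ k + 1, Attains T₀ p₀ p₀ (pumpExp a e 0) (pumpExp a e l) := by
    intro l hl
    induction l with
    | zero => exact .refl _ _ _
    | succ l ih => exact (ih (by omega)).trans (H.attains_pumpExp_succ ha (by omega))
  have hfirst : pumpExp a e 0 = a := by
    funext x
    simp [pumpExp, H.le_exp x]
  have hlast : pumpExp a e (k + 1) = e := funext fun x => min_eq_left (H.exp_le x)
  simpa only [hfirst, hlast] using hrounds (k + 1) le_rfl

end Attains

/-! ### The dichotomy for runs -/

section Dichotomy

variable {Q X : Type*} {T : Finset (Tr Q X)} {p q r : Q} {t : Tr Q X} {v : X → ℤ}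
  {w : List (Tr Q X)} {a e : X → ℕ} {k : ℕ} {c : X}

/-- The state `q` is reachable from `p` by transitions in `T`, counter values being ignored. -/
def Reach (T : Finset (Tr Q X)) (p q : Q) : Prop := ∃ w, IsWalk p w q ∧ ∀ t ∈ w, t ∈ T

theorem Reach.refl (T : Finset (Tr Q X)) (p : Q) : Reach T p p := ⟨[], rfl, by simp⟩

theorem Reach.trans : Reach T p q → Reach T q r → Reach T p r
  | ⟨w, hw, hT⟩, ⟨w', hw', hT'⟩ =>
    ⟨w ++ w', hw.append hw', List.forall_mem_append.2 ⟨hT, hT'⟩⟩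

theorem Reach.of_mem (ht : t ∈ T) : Reach T t.1 t.2.2 :=
  ⟨[t], isWalk_singleton t, List.forall_mem_singleton.2 ht⟩

/-- The states `p` and `q` are strongly connected by transitions in `T`. -/
def InScc (T : Finset (Tr Q X)) (p q : Q) : Prop := Reach T p q ∧ Reach T q p

theorem InScc.refl (T : Finset (Tr Q X)) (p : Q) : InScc T p p := ⟨.refl T p, .refl T p⟩

/-- The transitions inside the strongly connected component of `p`. -/
def scc (T : Finset (Tr Q X)) (p : Q) : Finset (Tr Q X) :=
  T.filter fun t => InScc T p t.1 ∧ InScc T p t.2.2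

theorem mem_scc : t ∈ scc T p ↔ t ∈ T ∧ InScc T p t.1 ∧ InScc T p t.2.2 := Finset.mem_filter

theorem InScc.exists_walk (hq : InScc T p q) (hr : InScc T p r) :
    ∃ w, IsWalk q w r ∧ ∀ t ∈ w, t ∈ scc T p := by
  obtain ⟨w, hw, hT⟩ := hq.2.trans hr.1
  refine ⟨w, hw, fun t ht => ?_⟩
  obtain ⟨w₁, w₂, rfl⟩ := List.append_of_mem ht
  rw [List.forall_mem_append, List.forall_mem_cons] at hT
  obtain ⟨_, hw₁, rfl, hw₂⟩ := isWalk_append.1 hw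
  have hfrom : Reach T p t.1 := hq.1.trans ⟨w₁, hw₁, hT.1⟩
  have hto : Reach T t.2.2 p := .trans ⟨w₂, hw₂, hT.2.2⟩ hr.2
  have hstep : Reach T t.1 t.2.2 := .of_mem hT.2.1
  exact mem_scc.2 ⟨hT.2.1, ⟨hfrom, hstep.trans hto⟩, hfrom.trans hstep, hto⟩

theorem Run.exists_exit (h : Run T p v w q) (hp : InScc T r p) :
    Run (scc T r) p v w q ∨ ∃ w₁ t w₂, w = w₁ ++ t :: w₂ ∧ Run (scc T r) p v w₁ t.1 ∧
      InScc T r t.1 ∧ ¬ InScc T r t.2.2 := by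
  induction w generalizing p v with
  | nil => exact .inl ⟨by simp, h.isWalk, h.executable⟩
  | cons t w ih =>
    obtain rfl : t.1 = p := h.isWalk.1
    have hv : 0 ≤ v := h.executable.1
    by_cases ht : InScc T r t.2.2
    · have hmem : t ∈ scc T r := mem_scc.2 ⟨h.mem t List.mem_cons_self, hp, ht⟩
      refine (ih h.tail ht).imp (Run.cons hmem hv) ?_
      rintro ⟨w₁, t', w₂, rfl, hw₁, hexit⟩
      exact ⟨t :: w₁, t', w₂, rfl, .cons hmem hv hw₁, hexit⟩
    · exact .inr ⟨[], t, w, rfl, ⟨by simp, rfl, hv⟩, hp, ht⟩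

/-- A fixed path costs only a constant, which is at most half of the value of every counter. -/
theorem Attains.of_reach [Finite X] (h : Reach T p q) (ha : ∀ x, 1 ≤ a x) : Attains T p q a a := by
  obtain ⟨u, hu, hT⟩ := h
  obtain ⟨U, hU⟩ := exists_executable_const u
  intro B
  refine ⟨2 * B, 2 * B * U + 1, fun n hn v hv => ?_⟩
  have hvU : ∀ x, (n : ℤ) ^ a x ≤ (2 * B : ℕ) * (v x - U) := fun x => by
    have hpow : (n : ℤ) ≤ (n : ℤ) ^ a x := by
      exact_mod_cast Nat.le_self_pow (Nat.one_le_iff_ne_zero.1 (ha x)) n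
    have hUn : (2 * B * U + 1 : ℤ) ≤ n := by exact_mod_cast hn
    push_cast
    linarith [hv x, hUn]
  have hUv : ∀ x, (U : ℤ) ≤ v x := fun x => by
    have hn' : 1 ≤ n := by omega
    linarith [(pos_of_pow_le hn' (hvU x)).2]
  refine ⟨u, ⟨hT, hu, hU.mono hUv⟩, fun x => (hvU x).trans ?_⟩
  have hend : 0 ≤ U + eff u x := hU.nonneg_end x
  rw [Pi.add_apply]
  gcongr
  linarith

/-- Along all runs from `p` on which every counter `x` with `a x ≤ k` starts in `O(n ^ a x)`, the
counter `c` stays in `O(n ^ k)`. Nothing is assumed about the other counters. -/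
def Confines (T : Finset (Tr Q X)) (k : ℕ) (p : Q) (a : X → ℕ) (c : X) : Prop :=
  ∀ B : ℕ, ∃ K : ℕ, ∀ n : ℕ, 1 ≤ n → ∀ v, (∀ x, a x ≤ k → v x ≤ B * (n : ℤ) ^ a x) →
    ∀ w q, Run T p v w q → (v + eff w) c ≤ K * (n : ℤ) ^ k

theorem Confines.exists_bound_cons [Finite X] (h : Confines T k t.2.2 a c) (B : ℕ) :
    ∃ K : ℕ, ∀ n : ℕ, 1 ≤ n → ∀ v, (∀ x, a x ≤ k → v x ≤ B * (n : ℤ) ^ a x) →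
      ∀ w q, Run T t.1 v (t :: w) q → (v + eff (t :: w)) c ≤ K * (n : ℤ) ^ k := by
  obtain ⟨D, hD⟩ := Finite.exists_le fun x => (t.2.1 x).toNat
  obtain ⟨K, hK⟩ := h (B + D)
  refine ⟨K, fun n hn v hv w q hw => ?_⟩
  rw [eff_cons, ← add_assoc]
  refine hK n hn _ (fun x hx => ?_) w q hw.tail
  have ht : t.2.1 x ≤ D := Int.toNat_le.1 (hD x)
  have hDn := natCast_le_mul_pow D (a x) hn
  rw [Pi.add_apply]
  push_cast
  linarith [hv x hx]

theorem confines_of_exits [Finite X] (hc : e c ≤ k)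
    (hscc : ∀ B : ℕ, ∃ K : ℕ, ∀ n : ℕ, 1 ≤ n → ∀ v, (∀ x, a x ≤ k → v x ≤ B * (n : ℤ) ^ a x) →
      ∀ w q, Run (scc T p) p v w q → ∀ x, e x ≤ k → (v + eff w) x ≤ K * (n : ℤ) ^ e x)
    (hexit : ∀ t ∈ T, InScc T p t.1 → ¬ InScc T p t.2.2 → Confines T k t.2.2 e c) :
    Confines T k p a c := by
  intro B
  obtain ⟨K, hK⟩ := hscc B
  have hK' : ∀ t : Tr Q X, ∃ K' : ℕ, t ∈ T → InScc T p t.1 → ¬ InScc T p t.2.2 →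
      ∀ n : ℕ, 1 ≤ n → ∀ v, (∀ x, e x ≤ k → v x ≤ K * (n : ℤ) ^ e x) →
        ∀ w q, Run T t.1 v (t :: w) q → (v + eff (t :: w)) c ≤ K' * (n : ℤ) ^ k := by
    intro t
    by_cases ht : t ∈ T ∧ InScc T p t.1 ∧ ¬ InScc T p t.2.2
    · obtain ⟨K', hK'⟩ := (hexit t ht.1 ht.2.1 ht.2.2).exists_bound_cons K
      exact ⟨K', fun _ _ _ => hK'⟩
    · exact ⟨0, fun h₁ h₂ h₃ => absurd ⟨h₁, h₂, h₃⟩ ht⟩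
  choose κ hκ using hK'
  refine ⟨max K (T.sup κ), fun n hn v hv w q hw => ?_⟩
  have hn' : (1 : ℤ) ≤ n := by exact_mod_cast hn
  rcases hw.exists_exit (InScc.refl T p) with hstay | ⟨w₁, t, w₂, rfl, hw₁, hin, hout⟩
  · refine (hK n hn v hv w q hstay c hc).trans ?_
    gcongr
    exact le_max_left _ _
  · obtain ⟨r, hr, hw₂⟩ := run_append.1 hw
    obtain rfl : t.1 = r := hw₂.isWalk.1
    have htT : t ∈ T := hw₂.mem t List.mem_cons_self
    have hbound := hκ t htT hin hout n hn _ (hK n hn v hv w₁ _ hw₁) w₂ q hw₂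
    rw [eff_append, ← add_assoc]
    refine hbound.trans ?_
    gcongr
    exact (Finset.le_sup htT).trans (le_max_right _ _)

theorem Reach.card_lt [Fintype Q] (hpq : Reach T p q) (hqp : ¬ Reach T q p) :
    (Finset.univ.filter (Reach T q)).card < (Finset.univ.filter (Reach T p)).card := by
  refine Finset.card_lt_card ((Finset.ssubset_iff_of_subset ?_).2 ⟨p, ?_, ?_⟩)
  · exact Finset.monotone_filter_right _ fun r _ hqr => hpq.trans hqr
  · simpa using Reach.refl T p
  · simpa using hqp

/-- The component of `p` raises the exponents from `a` to `e`; unless `e c = k + 1` already, a run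
that makes `c` larger has to leave the component, after which fewer states are reachable. -/
theorem confines_or_exists_attains [Finite Q] [Finite X] (T : Finset (Tr Q X)) (p : Q) (c : X)
    (ha : ∀ x, 1 ≤ a x) (hak : ∀ x, a x ≤ k + 1) :
    Confines T k p a c ∨ ∃ q e, Attains T p q a e ∧ e c = k + 1 := by
  have := Fintype.ofFinite Q
  have := Fintype.ofFinite X
  induction hN : (Finset.univ.filter (Reach T p)).card using Nat.strong_induction_on
    generalizing p a with
  | _ N ih =>
  subst hN
  obtain ⟨M, e, H⟩ := exists_layers (T₀ := scc T p) p ha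
    (fun t ht => (mem_scc.1 ht).2.2.exists_walk (mem_scc.1 ht).2.1) k
  have he : ∀ x, 1 ≤ e x := fun x => (ha x).trans (H.le_exp x)
  have hek : ∀ x, e x ≤ k + 1 := fun x => (H.exp_le x).trans (max_le (hak x) le_rfl)
  have hattains : Attains T p p a e := (H.attains ha).mono (Finset.filter_subset _ _)
  by_cases hc : e c = k + 1
  · exact .inr ⟨p, e, hattains, hc⟩
  by_cases hexit : ∃ t ∈ T, InScc T p t.1 ∧ ∃ q e', Attains T t.2.2 q e e' ∧ e' c = k + 1
  · obtain ⟨t, ht, hin, q, e', h, hc'⟩ := hexit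
    have hpath : Attains T p t.2.2 e e := .of_reach (hin.1.trans (.of_mem ht)) he
    exact .inr ⟨q, e', (hattains.trans hpath).trans h, hc'⟩
  · refine .inl (confines_of_exits (e := e) (by have := hek c; omega) (fun B => ?_)
      fun t ht hin hout => ?_)
    · obtain ⟨K, hK⟩ := H.exists_bound ha B le_rfl
      exact ⟨K, fun n hn v hv w q hw => (hK n hn v hv w q hw).1⟩
    · have hpt : Reach T p t.2.2 := hin.1.trans (.of_mem ht)
      exact (ih _ (hpt.card_lt fun htp => hout ⟨hpt, htp⟩) t.2.2 he hek rfl).resolve_right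
        fun h => hexit ⟨t, ht, hin, h⟩

end Dichotomy

/-! ### Plays of a demonic VASS -/

section Plays

/-- The counter values of a configuration, as a vector of integers. -/
def VASS.counters (V : VASS d) (c : V.Config) : Fin d → ℤ := fun i => c.2 i

variable {V : VASS d} {own : V.Q → Prop} {σ : AngelStrategy V} {π : DemonStrategy V}
  {c init : V.Config} {q : V.Q} {t : Tr V.Q (Fin d)} {w w' : List (Tr V.Q (Fin d))}

theorem enabled_iff_run : V.enabled c t ↔ Run V.Tran c.1 (V.counters c) [t] t.2.2 := by
  constructor
  · rintro ⟨ht, hc, hpos⟩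
    exact ⟨List.forall_mem_singleton.2 ht, ⟨hc, rfl⟩, fun i => Int.natCast_nonneg _, hpos⟩
  · intro h
    exact ⟨h.mem t List.mem_cons_self, h.isWalk.1, h.executable.2⟩

theorem VASS.enabled.counters_applyT (h : V.enabled c t) :
    V.counters (V.applyT c t) = V.counters c + t.2.1 :=
  funext fun i => Int.toNat_of_nonneg (h.2.2 i)

theorem exists_run_of_playAux {n : ℕ} {h : List V.Config} (hc : playAux σ π init n = some (h, c)) :
    ∃ w, w.length = n ∧ Run V.Tran init.1 (V.counters init) w c.1 ∧
      V.counters c = V.counters init + eff w := by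
  induction n generalizing h c with
  | zero =>
    obtain ⟨-, rfl⟩ : [] = h ∧ init = c := by simpa [playAux] using hc
    exact ⟨[], rfl, ⟨by simp, rfl, fun i => Int.natCast_nonneg _⟩, by simp⟩
  | succ n ih =>
    obtain ⟨⟨h', c'⟩, hc', hstep⟩ := Option.bind_eq_some_iff.1 hc
    obtain ⟨ht, -, rfl⟩ := by simpa only [Option.ite_none_right_eq_some, Option.some.injEq,
      Prod.mk.injEq] using hstep
    obtain ⟨w, hlen, hw, hval⟩ := ih hc'
    generalize (if V.angelic c'.1 then σ.choose h' c' else π.choose h' c') = t at ht ⊢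
    refine ⟨w ++ [t], by simp [hlen], run_append.2 ⟨_, hw, hval ▸ enabled_iff_run.1 ht⟩, ?_⟩
    rw [ht.counters_applyT, hval]
    simp [add_assoc]

/-- The strategy that proposes `pref h c` and plays it whenever it is enabled; if it is not, an
arbitrary legal transition is played. -/
def Strategy.ofPref (own : V.Q → Prop) (pref : List V.Config → V.Config → Tr V.Q (Fin d)) :
    Strategy V own where
  choose h c := if V.enabled c (pref h c) then pref h c
    else if hen : ∃ t, V.enabled c t then hen.choose
    else if hout : ∃ t ∈ V.Tran, t.1 = c.1 then hout.choose else pref h c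
  choose_mem h c _ hout := by
    split_ifs with hpref hen
    · exact ⟨hpref.1, hpref.2.1⟩
    · exact ⟨hen.choose_spec.1, hen.choose_spec.2.1⟩
    · exact hout.choose_spec
  choose_enabled h c _ hen := by
    split_ifs with hpref
    · exact hpref
    · exact hen.choose_spec

instance : Nonempty (Strategy V own) := ⟨.ofPref own fun _ c => (c.1, 0, c.1)⟩

/-- Demon's strategy of taking the transitions in `w` one after the other. -/
def DemonStrategy.follow (w : List (Tr V.Q (Fin d))) : DemonStrategy V :=
  .ofPref _ fun h c => w[h.length]?.getD (c.1, 0, c.1)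

theorem DemonStrategy.follow_choose {h : List V.Config} (ht : w[h.length]? = some t)
    (hen : V.enabled c t) : (follow w).choose h c = t := by
  simp [follow, Strategy.ofPref, ht, hen]

theorem exists_playAux_follow (hD : V.demonic) (σ : AngelStrategy V) (hw' : w' <+: w)
    (hrun : Run V.Tran init.1 (V.counters init) w' q) :
    ∃ h c, playAux σ (.follow w) init w'.length = some (h, c) ∧ h.length = w'.length ∧
      c.1 = q ∧ V.counters c = V.counters init + eff w' := by
  induction w' using List.reverseRecOn generalizing q with
  | nil => exact ⟨[], init, rfl, rfl, hrun.isWalk, by simp⟩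
  | append_singleton w' t ih =>
    obtain ⟨r, hw₁, ht⟩ := run_append.1 hrun
    obtain ⟨h, c, hplay, hlen, rfl, hval⟩ := ih ((List.prefix_append _ _).trans hw') hw₁
    obtain rfl : t.2.2 = q := ht.isWalk.2
    have hen : V.enabled c t := enabled_iff_run.2 (hval ▸ ht)
    have hnext : w[h.length]? = some t := by
      obtain ⟨w'', rfl⟩ := hw'
      simp [hlen]
    refine ⟨h ++ [c], V.applyT c t, ?_, by simp [hlen], rfl, ?_⟩
    · rw [List.length_append, List.length_singleton, playAux, hplay]
      simp [hD c.1, DemonStrategy.follow_choose hnext hen, hen]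
    · rw [hen.counters_applyT, hval]
      simp [add_assoc]

theorem Cval_le {i : Fin d} {B : ℕ}
    (h : ∀ w q, Run V.Tran init.1 (V.counters init) w q → (V.counters init + eff w) i ≤ B) :
    Cval V i init ≤ B := by
  refine iInf_le_of_le (Classical.arbitrary _) (iSup_le fun π => iSup₂_le ?_)
  rintro c ⟨n, _, hc⟩
  obtain ⟨w, -, hw, hval⟩ := exists_run_of_playAux hc
  have hle := h w _ hw
  rw [← hval] at hle
  exact Nat.cast_le.2 (Int.ofNat_le.1 hle)

theorem le_Cval (hD : V.demonic) {i : Fin d} {m : ℕ}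
    (hw : Run V.Tran init.1 (V.counters init) w q) (hm : m ≤ (V.counters init + eff w) i) :
    m ≤ Cval V i init := by
  refine le_iInf fun σ => ?_
  obtain ⟨h, c, hplay, -, -, hval⟩ := exists_playAux_follow hD σ List.prefix_rfl hw
  refine le_iSup_of_le _ (le_iSup₂_of_le c ⟨_, h, hplay⟩ ?_)
  rw [← hval] at hm
  exact Nat.cast_le.2 (Int.ofNat_le.1 hm)

theorem Tval_le {B : ℕ}
    (h : ∀ w q, Run V.Tran init.1 (V.counters init) w q → w.length + 1 ≤ B) : Tval V init ≤ B := by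
  refine iInf_le_of_le (Classical.arbitrary _) (iSup_le fun π => iSup₂_le fun n hn => ?_)
  obtain ⟨⟨_, c⟩, hc⟩ := Option.isSome_iff_exists.1 hn
  obtain ⟨w, rfl, hw, -⟩ := exists_run_of_playAux hc
  exact_mod_cast h w _ hw

theorem length_le_Tval (hD : V.demonic) (hw : Run V.Tran init.1 (V.counters init) w q) :
    w.length ≤ Tval V init := by
  refine le_iInf fun σ => ?_
  obtain ⟨h, c, hplay, -⟩ := exists_playAux_follow hD σ List.prefix_rfl hw
  have hsome : (playAux σ (.follow w) init w.length).isSome := by rw [hplay]; rfl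
  exact le_iSup_of_le _ (le_iSup₂_of_le w.length hsome le_self_add)

end Plays

section Clock

variable {Q X : Type*} {T : Finset (Tr Q X)} {p q : Q} {v : Option X → ℤ} {w : List (Tr Q X)}
  {w' : List (Tr Q (Option X))}

/-- The transition `t` with an additional counter `none`, which it increments. -/
def withClock (t : Tr Q X) : Tr Q (Option X) := (t.1, fun x => x.elim 1 t.2.1, t.2.2)

/-- The transitions in `T` with an additional counter `none`, which counts the steps. -/
def clocked (T : Finset (Tr Q X)) : Finset (Tr Q (Option X)) := T.image withClock

theorem eff_map_withClock_none (w : List (Tr Q X)) : eff (w.map withClock) none = w.length := by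
  induction w with
  | nil => rfl
  | cons t w ih => simp [ih, withClock, add_comm]

theorem Run.map_withClock (h : Run T p (v ∘ some) w q) (hv : 0 ≤ v none) :
    Run (clocked T) p v (w.map withClock) q := by
  have hv' : 0 ≤ v := Option.forall.2 ⟨hv, h.executable.nonneg⟩
  induction w generalizing p v with
  | nil => exact ⟨by simp, h.isWalk, hv'⟩
  | cons t w ih =>
    obtain rfl : t.1 = p := h.isWalk.1
    have hnone : 0 ≤ (v + (withClock t).2.1) none := add_nonneg hv zero_le_one
    exact .cons (Finset.mem_image_of_mem _ (h.mem t List.mem_cons_self)) hv'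
      (ih h.tail hnone (Option.forall.2 ⟨hnone, h.tail.executable.nonneg⟩))

theorem Run.exists_map_withClock (h : Run (clocked T) p v w' q) :
    ∃ w, w' = w.map withClock ∧ Run T p (v ∘ some) w q := by
  induction w' generalizing p v with
  | nil => exact ⟨[], rfl, by simp, h.isWalk, fun x => h.executable (some x)⟩
  | cons t' w' ih =>
    obtain rfl : t'.1 = p := h.isWalk.1
    obtain ⟨t, ht, rfl⟩ := Finset.mem_image.1 (h.mem t' List.mem_cons_self)
    obtain ⟨w, rfl, hw⟩ := ih h.tail
    exact ⟨t :: w, rfl, .cons ht (fun x => h.executable.1 (some x)) hw⟩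

end Clock

section Complexity

variable {V : VASS d} {p : V.Q} {i : Fin d} {k : ℕ} {g : ℕ → ℕ} {ι : Type*} {f : ι → ℕ → ℕ∞}

theorem bigO_iSup [Finite ι] (h : ∀ j, BigO (f j) g) : BigO (fun n => ⨆ j, f j n) g := by
  choose C N h using h
  obtain ⟨C', hC'⟩ := Finite.exists_le C
  obtain ⟨N', hN'⟩ := Finite.exists_le N
  refine ⟨C', N', fun n hn => iSup_le fun j => (h j n ((hN' j).trans hn)).trans ?_⟩
  exact_mod_cast Nat.mul_le_mul_right _ (hC' j)

theorem BigOmega.iSup {j : ι} (h : BigOmega (f j) g) : BigOmega (fun n => ⨆ j, f j n) g := by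
  obtain ⟨c, N, hc, h⟩ := h
  refine ⟨c, N, hc, fun n hn => (h n hn).trans ?_⟩
  gcongr
  exact le_iSup (fun j => f j n) j

theorem Confines.bigO_Cval (h : Confines V.Tran k p (fun _ => 1) i) :
    BigO (fun n => Cval V i (p, fun _ => n)) (fun n => n ^ k) := by
  obtain ⟨K, hK⟩ := h 1
  refine ⟨K, 1, fun n hn => Cval_le fun w q hw => ?_⟩
  exact_mod_cast hK n hn _ (fun _ _ => by simp [VASS.counters]) w q hw

theorem Attains.bigOmega_Cval (hD : V.demonic) {q : V.Q} {e : Fin d → ℕ}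
    (h : Attains V.Tran p q (fun _ => 1) e) :
    BigOmega (fun n => Cval V i (p, fun _ => n)) (fun n => n ^ e i) := by
  obtain ⟨K, N, hK⟩ := h 1
  refine ⟨K + 1, N, K.succ_pos, fun n hn => ?_⟩
  obtain ⟨w, hw, hgain⟩ := hK n hn (V.counters (p, fun _ => n)) (by simp [VASS.counters])
  obtain ⟨m, hm⟩ := Int.eq_ofNat_of_zero_le (hw.executable.nonneg_end i)
  have hpow : n ^ e i ≤ K * m := by exact_mod_cast hm ▸ hgain i
  calc ((n ^ e i : ℕ) : ℕ∞) ≤ ((K + 1 : ℕ) : ℕ∞) * m := by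
        exact_mod_cast hpow.trans (Nat.mul_le_mul_right m K.le_succ)
    _ ≤ (K + 1 : ℕ) * Cval V i (p, fun _ => n) := by
        gcongr
        exact le_Cval hD hw hm.ge

theorem Confines.bigO_Tval (h : Confines (clocked V.Tran) k p (fun _ => 1) none) :
    BigO (fun n => Tval V (p, fun _ => n)) (fun n => n ^ k) := by
  obtain ⟨K, hK⟩ := h 1
  refine ⟨K, 1, fun n hn => Tval_le fun w q hw => ?_⟩
  have hbound := hK n hn (fun _ => n) (fun _ _ => by simp) _ q (hw.map_withClock (by simp))
  rw [Pi.add_apply, eff_map_withClock_none] at hbound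
  have hbound : n + w.length ≤ K * n ^ k := by exact_mod_cast hbound
  exact le_trans (by omega) hbound

/-- The clock starts at `n`, which is negligible against `n ^ e none`. -/
theorem Attains.bigOmega_Tval (hD : V.demonic) {q : V.Q} {e : Option (Fin d) → ℕ}
    (h : Attains (clocked V.Tran) p q (fun _ => 1) e) (he : 2 ≤ e none) :
    BigOmega (fun n => Tval V (p, fun _ => n)) (fun n => n ^ e none) := by
  obtain ⟨K, N, hK⟩ := h 1
  refine ⟨2 * K + 1, max N (2 * K + 1), Nat.succ_pos _, fun n hn => ?_⟩
  have hKn : 2 * K + 1 ≤ n := le_of_max_le_right hn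
  obtain ⟨w', hw', hgain⟩ := hK n (le_of_max_le_left hn) (fun _ => n) (by simp)
  obtain ⟨w, rfl, hw⟩ := hw'.exists_map_withClock
  have hclock : n ^ e none ≤ K * (n + w.length) := by
    have := hgain none
    rw [Pi.add_apply, eff_map_withClock_none] at this
    exact_mod_cast this
  have hstart : 2 * K * n ≤ n ^ e none :=
    calc 2 * K * n ≤ n * n := by gcongr; omega
      _ = n ^ 2 := (sq n).symm
      _ ≤ n ^ e none := by gcongr; omega
  calc ((n ^ e none : ℕ) : ℕ∞) ≤ ((2 * K + 1 : ℕ) : ℕ∞) * w.length := by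
        exact_mod_cast show n ^ e none ≤ (2 * K + 1) * w.length by linarith
    _ ≤ (2 * K + 1 : ℕ) * Tval V (p, fun _ => n) := by
        gcongr
        exact length_le_Tval hD hw

theorem counter_dichotomy (k : ℕ) (hD : V.demonic) (i : Fin d) :
    BigO (Ccomp V i) (fun n => n ^ k) ∨ BigOmega (Ccomp V i) (fun n => n ^ (k + 1)) := by
  by_cases h : ∀ p, Confines V.Tran k p (fun _ => 1) i
  · exact .inl (bigO_iSup fun p => (h p).bigO_Cval)
  · obtain ⟨p, hp⟩ := not_forall.1 h
    obtain ⟨q, e, he, hi⟩ := (confines_or_exists_attains V.Tran p i (k := k) (fun _ => le_rfl)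
      fun _ => Nat.le_add_left 1 k).resolve_left hp
    exact .inr (hi ▸ (he.bigOmega_Cval hD).iSup (f := fun p n => Cval V i (p, fun _ => n)))

theorem termination_dichotomy (hk : 1 ≤ k) (hD : V.demonic) :
    BigO (Lcomp V) (fun n => n ^ k) ∨ BigOmega (Lcomp V) (fun n => n ^ (k + 1)) := by
  by_cases h : ∀ p, Confines (clocked V.Tran) k p (fun _ => 1) none
  · exact .inl (bigO_iSup fun p => (h p).bigO_Tval)
  · obtain ⟨p, hp⟩ := not_forall.1 h
    obtain ⟨q, e, he, hnone⟩ := (confines_or_exists_attains (clocked V.Tran) p none (k := k)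
      (fun _ => le_rfl) fun _ => Nat.le_add_left 1 k).resolve_left hp
    exact .inr (hnone ▸ (he.bigOmega_Tval hD (by omega)).iSup
      (f := fun p n => Tval V (p, fun _ => n)))

end Complexity

/-- Let `k ≥ 1`. For every demonic VASS `A` and every counter `c` of `A`,
the termination complexity `L` of `A` is either in `O(n^k)` or in `Ω(n^{k+1})`, and the
counter complexity `C[c]` of `A` is either in `O(n^k)` or in `Ω(n^{k+1})`. -/
theorem demonic_polynomial_dichotomy {d : ℕ} (k : ℕ) (hk : 1 ≤ k)
    (V : VASS d) (hT : V.total) (hD : V.demonic) :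
    (BigO (Lcomp V) (fun n => n ^ k) ∨ BigOmega (Lcomp V) (fun n => n ^ (k + 1))) ∧
    ∀ c : Fin d,
      BigO (Ccomp V c) (fun n => n ^ k) ∨ BigOmega (Ccomp V c) (fun n => n ^ (k + 1)) := by
  exact ⟨termination_dichotomy hk hD, counter_dichotomy k hD⟩

end
end VassPaper
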